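/- arXiv:1408.2559 — 2 statements merged into one kernel-verified Lean document; each statement's English description precedes it below -/
import Mathlib

section
/- For every ε > 0 there exists n₀ such that for all n ≥ n₀ and all integers k ≥ 3 and t ≥ 1 with t < k and n ≥ (t+1)(k−t+1) + η_{k,t}: the number of non-trivial t-intersecting k-uniform hypergraphs on [n] is at most ε·binom(n,t)·2^{binom(n−t,k−t)}, and the total number of t-intersecting k-uniform hypergraphs on [n] lies between (1−ε)·binom(n,t)·2^{binom(n−t,k−t)} and (1+ε)·binom(n,t)·2^{binom(n−t,k−t)}. -/
/-- A family of edges forms a `k`-uniform hypergraph on `[n]`. -/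
def IsKUniform (n k : ℕ) (H : Finset (Finset (Fin n))) : Prop :=
  ∀ e ∈ H, e.card = k

/-- A hypergraph is `t`-intersecting if any two of its edges share at least `t` vertices. -/
def IsTIntersectingHyp (n t : ℕ) (H : Finset (Finset (Fin n))) : Prop :=
  ∀ e ∈ H, ∀ f ∈ H, t ≤ (e ∩ f).card

/-- A `t`-intersecting hypergraph is trivial if some fixed `t`-set of vertices is
contained in all of its edges. -/
def IsTrivialHyp (n t : ℕ) (H : Finset (Finset (Fin n))) : Prop :=
  ∃ S : Finset (Fin n), S.card = t ∧ ∀ e ∈ H, S ⊆ e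

/-- The quantity `η_{k,t}` from the statement of the theorem. -/
noncomputable def eta (k t : ℕ) : ℝ :=
  if t = 1 then (k : ℝ) + 8 * Real.log k
  else if t = 2 ∧ 3 ≤ k - t then 12 * Real.log k
  else if 3 ≤ t ∧ 3 ≤ k - t then 1
  else if 2 ≤ t ∧ k - t = 2 then 31
  else 18 * (k : ℝ)

/-!
A non-trivial `t`-intersecting family of maximum size can be taken shifted. Order the vertices and
let `m` be least such that every edge generates the family locally by its trace on the first `m`
vertices. If the edges that are determined by fewer vertices formed a non-trivial family, an
exchange in the sense of Ahlswede and Khachatrian would enlarge the family, because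
`(t + 1)(k - t + 1) < n`. So they all contain the first `t` vertices, and every edge that does not
contains all but one of the first `m` vertices. With `s = k - t` this bounds every non-trivial
family by `C(n - t, s) - C(n - m, s) + t C(n - m, k + 1 - m)`, and the surplus `η` in the lower
bound for `n` keeps this below `C(n - t, s)` by a margin of order `s 4^s log n`.

On the other hand, by Füredi's set-pair inequality an inclusion-maximal `t`-intersecting family is
the set of all `k`-sets compatible with at most `C(2s + 2, s + 1)` of its edges. There are thus at
most `C(n, t) n^{O(s 4^s)}` such families, and the margin makes the number of their subfamilies
negligible against `C(n, t) 2^{C(n - t, s)}`. The trivial families are the subfamilies of the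
`C(n, t)` full stars, hardly any of which lie in two stars.
-/

open Finset

/-! ### The set-pair inequality -/

section GeneralPosition

open Module

variable {K V κ : Type*} [Field K] [AddCommGroup V] [Module K V]

theorem exists_forall_isCompl [Infinite K] [FiniteDimensional K V] [Finite κ] {d : ℕ}
    (U : κ → Submodule K V) (hU : ∀ i, finrank K (U i) = d) :
    ∃ W : Submodule K V, ∀ i, IsCompl (U i) W := by
  rcases le_or_gt (finrank K V) d with hd | hd
  · exact ⟨⊥, fun i ↦ (Submodule.eq_top_of_finrank_eq
      (le_antisymm (Submodule.finrank_le _) ((hU i).symm ▸ hd))).symm ▸ isCompl_top_bot⟩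
  obtain ⟨v, hv⟩ : ∃ v, ∀ i, v ∉ U i := by
    by_contra! h
    obtain ⟨i, hi⟩ := Subspace.exists_eq_top_of_iUnion_eq_univ (p := U)
      (Set.eq_univ_of_forall fun v ↦ Set.mem_iUnion.mpr (h v))
    have := hU i
    rw [hi, finrank_top] at this
    omega
  have hv0 (i : κ) : v ≠ 0 := fun h ↦ hv i (h ▸ zero_mem _)
  have hdisj (i : κ) : Disjoint (U i) (K ∙ v) :=
    Submodule.disjoint_span_singleton_of_notMem (hv i)
  obtain ⟨W, hW⟩ := exists_forall_isCompl (d := d + 1) (fun i ↦ U i ⊔ K ∙ v) fun i ↦ by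
    have := Submodule.finrank_sup_add_finrank_inf_eq (U i) (K ∙ v)
    rwa [(hdisj i).eq_bot, finrank_bot, hU, finrank_span_singleton (hv0 i)] at this
  refine ⟨(K ∙ v) ⊔ W, fun i ↦ ⟨(hdisj i).disjoint_sup_right_of_disjoint_sup_left (hW i).disjoint,
    ?_⟩⟩
  rw [codisjoint_iff, ← sup_assoc, (hW i).sup_eq_top]
termination_by finrank K V - d

/-- The determinant in the basis `b` as an alternating function of its first `p` arguments,
the last `q` being fixed to `w`. -/
noncomputable def detLeft {p q : ℕ} (b : Basis (Fin p ⊕ Fin q) K V) (w : Fin q → V) :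
    V [⋀^Fin p]→ₗ[K] K where
  toFun u := b.det (Sum.elim u w)
  map_update_add' u i x y := by
    simp only [← Sum.update_elim_inl, AlternatingMap.map_update_add]
  map_update_smul' u i c x := by
    simp only [← Sum.update_elim_inl, AlternatingMap.map_update_smul]
  map_eq_zero_of_eq' u i j h hij :=
    b.det.map_eq_zero_of_eq _ (i := Sum.inl i) (j := Sum.inl j) h (by simpa using hij)

/-- Lovász's exterior algebra argument: `u i` and `w j` pair to `det (u i | w j)`, which is
nonzero exactly for `i = j`, so the `⋀ u i` are linearly independent. -/
theorem card_le_choose_of_linearIndependent_sumElim_iff_of_finrank_eq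
    [FiniteDimensional K V] [Fintype κ] {p q : ℕ} (hV : finrank K V = p + q)
    (u : κ → Fin p → V) (w : κ → Fin q → V)
    (h : ∀ i j, LinearIndependent K (Sum.elim (u i) (w j)) ↔ i = j) :
    Fintype.card κ ≤ (p + q).choose p := by
  classical
  rcases isEmpty_or_nonempty κ with _ | ⟨⟨i₀⟩⟩
  · simp
  have hspan {v : Fin p ⊕ Fin q → V} (hv : LinearIndependent K v) :
      Submodule.span K (Set.range v) = ⊤ :=
    hv.span_eq_top_of_card_eq_finrank' (by simp [hV])
  let b := Basis.mk ((h i₀ i₀).mpr rfl) (hspan ((h i₀ i₀).mpr rfl)).ge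
  have hdet (i j) : detLeft b (w j) (u i) = 0 ↔ i ≠ j := by
    rw [ne_eq, ← h, ← and_iff_left_of_imp hspan, b.is_basis_iff_det, isUnit_iff_ne_zero, not_not]
    rfl
  have hli : LinearIndependent K fun i ↦ exteriorPower.ιMulti K p (u i) := by
    refine .of_pairwise_dual_eq_zero_one _ (fun i ↦ (detLeft b (w i) (u i))⁻¹ •
      exteriorPower.alternatingMapLinearEquiv (detLeft b (w i))) ?_ ?_
    · intro i j hij
      simp [(hdet j i).mpr hij.symm]
    · intro i
      simp [inv_mul_cancel₀ (mt (hdet i i).mp (not_not.mpr rfl))]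
  simpa [exteriorPower.finrank_eq, hV] using hli.fintype_card_le_finrank

theorem card_le_choose_of_linearIndependent_sumElim_iff [Infinite K] [Fintype κ] {p q : ℕ}
    (u : κ → Fin p → V) (w : κ → Fin q → V)
    (h : ∀ i j, LinearIndependent K (Sum.elim (u i) (w j)) ↔ i = j) :
    Fintype.card κ ≤ (p + q).choose p := by
  let S : Submodule K V := Submodule.span K
    (Set.range (fun x : κ × Fin p ↦ u x.1 x.2) ∪ Set.range (fun x : κ × Fin q ↦ w x.1 x.2))
  have : FiniteDimensional K S := FiniteDimensional.span_of_finite K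
    ((Set.finite_range _).union (Set.finite_range _))
  let u' (i : κ) (a : Fin p) : S := ⟨u i a, Submodule.subset_span (.inl ⟨(i, a), rfl⟩)⟩
  let w' (i : κ) (a : Fin q) : S := ⟨w i a, Submodule.subset_span (.inr ⟨(i, a), rfl⟩)⟩
  have h' (i j) : LinearIndependent K (Sum.elim (u' i) (w' j)) ↔ i = j := by
    rw [← h, ← LinearMap.linearIndependent_iff S.subtype S.ker_subtype, Sum.comp_elim]
    rfl
  obtain ⟨W, hW⟩ := exists_forall_isCompl
    (fun i ↦ Submodule.span K (Set.range (Sum.elim (u' i) (w' i)))) (d := p + q) fun i ↦ by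
      simpa using finrank_span_eq_card ((h' i i).mpr rfl)
  rcases isEmpty_or_nonempty κ with _ | ⟨⟨i₀⟩⟩
  · simp
  refine card_le_choose_of_linearIndependent_sumElim_iff_of_finrank_eq (K := K) (V := S ⧸ W) ?_
    (fun i a ↦ Submodule.mkQ W (u' i a)) (fun i a ↦ Submodule.mkQ W (w' i a)) fun i j ↦ ?_
  · rw [(Submodule.quotientEquivOfIsCompl _ _ (hW i₀).symm).finrank_eq]
    simpa using finrank_span_eq_card ((h' i₀ i₀).mpr rfl)
  · have hcomp : Sum.elim (fun a ↦ W.mkQ (u' i a)) (fun a ↦ W.mkQ (w' j a)) =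
        W.mkQ ∘ Sum.elim (u' i) (w' j) := (Sum.comp_elim _ _ _).symm
    rw [hcomp]
    refine ⟨fun hli ↦ (h' i j).mp hli.of_comp, ?_⟩
    rintro rfl
    exact ((h' i i).mpr rfl).map (W.ker_mkQ.symm ▸ (hW i).disjoint)

end GeneralPosition

section SetPairs

open Polynomial

variable {K : Type*} [Field K]

lemma sum_smul_sumElim_mul_X_pow (f p q : K[X]) {m : ℕ} [DecidableEq K] (c : Fin m ⊕ Fin m → K) :
    ∑ x, c x • Sum.elim (fun a : Fin m ↦ f * p * X ^ (a : ℕ))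
        (fun a : Fin m ↦ f * q * X ^ (a : ℕ)) x =
      f * (p * ofFn m (c ∘ Sum.inl) + q * ofFn m (c ∘ Sum.inr)) := by
  simp only [Fintype.sum_sum_type, ofFn_eq_sum_monomial, mul_add, mul_sum, Sum.elim_inl,
    Sum.elim_inr, Function.comp_apply, ← C_mul_X_pow_eq_monomial, smul_eq_C_mul]
  exact congrArg₂ _ (sum_congr rfl fun a _ ↦ by ring) (sum_congr rfl fun a _ ↦ by ring)

theorem linearIndependent_sumElim_mul_X_pow_iff {f p q : K[X]} (hf : f ≠ 0) (hpq : IsCoprime p q)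
    (hdeg : p.degree = q.degree) (m : ℕ) :
    LinearIndependent K (Sum.elim (fun a : Fin m ↦ f * p * X ^ (a : ℕ))
      fun a : Fin m ↦ f * q * X ^ (a : ℕ)) ↔ (m : WithBot ℕ) ≤ p.degree := by
  classical
  rw [Fintype.linearIndependent_iff]
  simp only [sum_smul_sumElim_mul_X_pow, mul_eq_zero, hf, false_or]
  refine ⟨fun h ↦ ?_, fun h c hc ↦ ?_⟩
  · by_contra! hlt
    have hp : p ≠ 0 := by
      rintro rfl
      have hq : q = 0 := by simpa using hdeg.symm
      exact not_isCoprime_zero_zero (hq ▸ hpq)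
    have hp' := (natDegree_lt_iff_degree_lt hp).mpr hlt
    have hq' : q.natDegree < m := by rwa [natDegree, ← hdeg]
    have hc := h (Sum.elim (toFn m q) (-toFn m p)) (by
      simp only [Sum.elim_comp_inl, Sum.elim_comp_inr, map_neg]
      rw [ofFn_comp_toFn_eq_id_of_natDegree_lt hp', ofFn_comp_toFn_eq_id_of_natDegree_lt hq']
      ring)
    refine hp ?_
    rw [← ofFn_comp_toFn_eq_id_of_natDegree_lt hp',
      show toFn m p = 0 from funext fun a ↦ by simpa using hc (Sum.inr a), map_zero]
  · have hl : ofFn m (c ∘ Sum.inl) = 0 := by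
      refine eq_zero_of_dvd_of_degree_lt (hpq.symm.dvd_of_dvd_mul_left ?_)
        ((ofFn_degree_lt _).trans_le (h.trans_eq hdeg))
      rw [eq_neg_of_add_eq_zero_left hc]
      exact (dvd_mul_right _ _).neg_right
    have hr : ofFn m (c ∘ Sum.inr) = 0 := by
      refine eq_zero_of_dvd_of_degree_lt (hpq.dvd_of_dvd_mul_left ?_)
        ((ofFn_degree_lt _).trans_le h)
      rw [eq_neg_of_add_eq_zero_right hc]
      exact (dvd_mul_right _ _).neg_right
    rw [← (ofFn m).map_zero] at hl hr
    rintro (a | a)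
    · exact congrFun (injective_ofFn m hl) a
    · exact congrFun (injective_ofFn m hr) a

variable {α κ : Type*}

/-- The monic polynomial whose roots are the elements of `A`, embedded in `K` by `v`. -/
noncomputable def rootPoly (v : α → K) (A : Finset α) : K[X] :=
  ∏ x ∈ A, (X - C (v x))

lemma monic_rootPoly (v : α → K) (A : Finset α) : (rootPoly v A).Monic :=
  monic_prod_of_monic _ _ fun _ _ ↦ monic_X_sub_C _

lemma degree_rootPoly (v : α → K) (A : Finset α) : (rootPoly v A).degree = #A := by
  simp [rootPoly, degree_prod]

lemma isCoprime_rootPoly {v : α → K} (hv : v.Injective) {A B : Finset α}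
    (h : Disjoint A B) :
    IsCoprime (rootPoly v A) (rootPoly v B) :=
  IsCoprime.prod_left fun _ hx ↦ IsCoprime.prod_right fun _ hy ↦
    isCoprime_X_sub_C_of_isUnit_sub
      (sub_ne_zero.mpr (hv.ne (disjoint_iff_ne.mp h _ hx _ hy))).isUnit

variable [DecidableEq α]

lemma rootPoly_inter_mul_rootPoly_sdiff (v : α → K) (A B : Finset α) :
    rootPoly v (A ∩ B) * rootPoly v (A \ B) = rootPoly v A :=
  prod_inter_mul_prod_sdiff A B _

lemma linearIndependent_rootPoly_mul_X_pow_iff {v : α → K} (hv : v.Injective) {s t : ℕ}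
    {A B : Finset α} (hA : #A = t + s) (hB : #B = t + s) :
    LinearIndependent K (Sum.elim (fun a : Fin (s + 1) ↦ rootPoly v A * X ^ (a : ℕ))
      fun a : Fin (s + 1) ↦ rootPoly v B * X ^ (a : ℕ)) ↔ #(A ∩ B) < t := by
  have hAB : #(A \ B) = #(B \ A) := card_sdiff_comm (hA.trans hB.symm)
  rw [← rootPoly_inter_mul_rootPoly_sdiff v A B, ← rootPoly_inter_mul_rootPoly_sdiff v B A,
    inter_comm B A, linearIndependent_sumElim_mul_X_pow_iff (monic_rootPoly v _).ne_zero
      (isCoprime_rootPoly hv disjoint_sdiff_sdiff) (by rw [degree_rootPoly, degree_rootPoly, hAB]),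
    degree_rootPoly, Nat.cast_le]
  have := card_inter_add_card_sdiff A B
  omega

/-- Füredi's threshold version of the Bollobás set-pair inequality. -/
theorem card_le_choose_of_card_inter_lt_iff [Fintype κ] {s t : ℕ} (A B : κ → Finset α)
    (hA : ∀ i, #(A i) = t + s) (hB : ∀ i, #(B i) = t + s)
    (h : ∀ i j, #(A i ∩ B j) < t ↔ i = j) :
    Fintype.card κ ≤ (2 * s + 2).choose (s + 1) := by
  let K := FractionRing (MvPolynomial α ℚ)
  let v : α → K := fun x ↦ algebraMap (MvPolynomial α ℚ) K (MvPolynomial.X x)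
  have hv : v.Injective :=
    (IsFractionRing.injective (MvPolynomial α ℚ) K).comp MvPolynomial.X_injective
  convert card_le_choose_of_linearIndependent_sumElim_iff (K := K)
    (fun i (a : Fin (s + 1)) ↦ rootPoly v (A i) * X ^ (a : ℕ))
    (fun i (a : Fin (s + 1)) ↦ rootPoly v (B i) * X ^ (a : ℕ)) fun i j ↦
      (linearIndependent_rootPoly_mul_X_pow_iff hv (hA i) (hB j)).trans (h i j) using 2
  ring

end SetPairs

/-! ### Locally generating sets -/

section Counting

lemma subset_of_forall_subset_of_superset {α : Type*} [Fintype α] {T V : Finset α} {k : ℕ}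
    (hVk : #V ≤ k) (hk : k < Fintype.card α) (h : ∀ A, #A = k → V ⊆ A → T ⊆ A) : T ⊆ V := by
  classical
  intro z hz
  by_contra hzV
  obtain ⟨A, hVA, hA, hAk⟩ := exists_subsuperset_card_eq (t := univ.erase z)
    (subset_erase.2 ⟨subset_univ V, hzV⟩) hVk
    (by rw [card_erase_of_mem (mem_univ z), card_univ]; omega)
  exact notMem_erase z _ (hA (h A hAk hVA hz))

variable {α : Type*} [Fintype α] [DecidableEq α]

lemma card_filter_inter_eq {S E : Finset α} {k : ℕ} (hES : E ⊆ S) (hEk : #E ≤ k) :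
    #{A ∈ powersetCard k univ | A ∩ S = E} = (Fintype.card α - #S).choose (k - #E) := by
  rw [← card_compl, ← card_powersetCard]
  refine card_nbij' (· \ S) (· ∪ E) (fun A hA ↦ ?_) (fun X hX ↦ ?_) (fun A hA ↦ ?_)
    fun X hX ↦ ?_
  all_goals simp only [mem_coe, mem_filter, mem_powersetCard, subset_univ, true_and] at *
  · obtain ⟨hA, rfl⟩ := hA
    refine ⟨fun x hx ↦ mem_compl.2 (mem_sdiff.1 hx).2, ?_⟩
    have := card_sdiff_add_card_inter A S
    omega
  · have hdisj : Disjoint X S := disjoint_left.2 fun x hx ↦ mem_compl.1 (hX.1 hx)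
    refine ⟨?_, ?_⟩
    · rw [card_union_of_disjoint (hdisj.mono_right hES)]
      omega
    · rw [union_inter_distrib_right, disjoint_iff_inter_eq_empty.1 hdisj, empty_union,
        inter_eq_left.2 hES]
  · rw [← hA.2, sdiff_union_inter]
  · rw [union_sdiff_distrib, sdiff_eq_empty_iff_subset.2 hES, union_empty]
    exact sdiff_eq_self_of_disjoint (disjoint_left.2 fun x hx ↦ mem_compl.1 (hX.1 hx))

lemma exists_superset_card_eq_card_inter_lt {X Y : Finset α} {k t : ℕ} (hXk : #X ≤ k)
    (hk : k ≤ Fintype.card α) (hXY : #(X ∩ Y) < t) (hY : k + #Y < Fintype.card α + t) :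
    ∃ A, X ⊆ A ∧ #A = k ∧ #(A ∩ Y) < t := by
  rcases le_total k #(X ∪ Yᶜ) with h | h
  · obtain ⟨A, hXA, hAY, hA⟩ := exists_subsuperset_card_eq subset_union_left hXk h
    refine ⟨A, hXA, hA, (card_le_card fun x hx ↦ ?_).trans_lt hXY⟩
    have := hAY (mem_inter.1 hx).1
    simp_all
  · obtain ⟨A, hXA, hA⟩ := exists_superset_card_eq h hk
    have hAY : A ∪ Y = univ := by
      ext x
      have : x ∉ Y → x ∈ A := fun hx ↦ hXA (by simp [hx])
      simp only [mem_union, mem_univ, iff_true]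
      tauto
    have := card_union_add_card_inter A Y
    rw [hAY, card_univ] at this
    exact ⟨A, subset_union_left.trans hXA, hA, by omega⟩

end Counting

section Generating

/-- The set of the first `m` vertices of `Fin n`. -/
def initSeg (n m : ℕ) : Finset (Fin n) := {x | x.val < m}

/-- `E` generates the `k`-uniform family `F` locally: every `k`-superset of `E` is an edge. Sets
with more than `k` elements are excluded, as they would satisfy this vacuously. -/
def Generates {α : Type*} (k : ℕ) (F : Finset (Finset α)) (E : Finset α) : Prop :=
  #E ≤ k ∧ ∀ A, #A = k → E ⊆ A → A ∈ F

/-- A family is shifted if replacing a vertex of an edge by a smaller one yields an edge. -/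
def IsShifted {n : ℕ} (F : Finset (Finset (Fin n))) : Prop :=
  ∀ e ∈ F, ∀ a b, a < b → b ∈ e → a ∉ e → insert a (e.erase b) ∈ F

/-- A non-trivial `t`-intersecting `k`-uniform hypergraph on `Fin n`. -/
def IsNontrivialHyp (n k t : ℕ) (F : Finset (Finset (Fin n))) : Prop :=
  IsKUniform n k F ∧ IsTIntersectingHyp n t F ∧ ¬ IsTrivialHyp n t F

variable {n k t m : ℕ} {F : Finset (Finset (Fin n))} {E E' A : Finset (Fin n)} {a b p : Fin n}

@[simp] lemma mem_initSeg {x : Fin n} : x ∈ initSeg n m ↔ x.val < m := by simp [initSeg]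

lemma card_initSeg (h : m ≤ n) : #(initSeg n m) = m := by
  simpa [initSeg, Fin.card_filter_val_lt] using h

lemma card_filter_inter_initSeg_eq (hm : m ≤ n) (hE : E ⊆ initSeg n m) (hEk : #E ≤ k) :
    #{A ∈ powersetCard k univ | A ∩ initSeg n m = E} = (n - m).choose (k - #E) := by
  rw [card_filter_inter_eq hE hEk, Fintype.card_fin, card_initSeg hm]

lemma erase_inter_initSeg_succ (p : Fin n) (A : Finset (Fin n)) :
    (A ∩ initSeg n (p + 1)).erase p = A ∩ initSeg n p := by
  ext x
  have : x ≠ p ∧ x.val < p + 1 ↔ x.val < p := by rw [ne_eq, Fin.ext_iff]; omega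
  simp only [mem_erase, mem_inter, mem_initSeg]
  tauto

lemma card_insert_erase (hb : b ∈ A) (ha : a ∉ A) : #(insert a (A.erase b)) = #A := by
  rw [card_insert_of_notMem (mt mem_of_mem_erase ha), card_erase_add_one hb]

lemma insert_erase_insert_erase (hb : b ∈ A) (ha : a ∉ A) :
    insert b ((insert a (A.erase b)).erase a) = A := by
  rw [erase_insert (mt mem_of_mem_erase ha), insert_erase hb]

lemma IsKUniform.generates (hU : IsKUniform n k F) (hA : A ∈ F) : Generates k F A :=
  ⟨(hU A hA).le, fun B hB hAB ↦ eq_of_subset_of_card_le hAB (by rw [hB, hU A hA]) ▸ hA⟩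

lemma Generates.mono (h : Generates k F E) (hEE' : E ⊆ E') (hE' : #E' ≤ k) : Generates k F E' :=
  ⟨hE', fun A hA hE'A ↦ h.2 A hA (hEE'.trans hE'A)⟩

lemma Generates.le_card_inter (hkn : k ≤ n) (hn : 2 * k < n + t) (hI : IsTIntersectingHyp n t F)
    (h : Generates k F E) (h' : Generates k F E') : t ≤ #(E ∩ E') := by
  by_contra! hlt
  obtain ⟨A, hEA, hA, hAE'⟩ := exists_superset_card_eq_card_inter_lt h.1 (by simpa using hkn) hlt
    (by rw [Fintype.card_fin]; have := h'.1; omega)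
  obtain ⟨B, hE'B, hB, hBA⟩ := exists_superset_card_eq_card_inter_lt (Y := A) h'.1
    (by simpa using hkn) (inter_comm A E' ▸ hAE') (by rw [Fintype.card_fin]; omega)
  exact (hI B (h'.2 B hB hE'B) A (h.2 A hA hEA)).not_gt hBA

lemma IsShifted.generates (hS : IsShifted F) (h : Generates k F E) (hab : a < b) (hb : b ∈ E)
    (ha : a ∉ E) : Generates k F (insert a (E.erase b)) := by
  refine ⟨(card_insert_erase hb ha).trans_le h.1, fun A hA hEA ↦ ?_⟩
  have haA : a ∈ A := hEA (mem_insert_self ..)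
  have hEbA : E.erase b ⊆ A := (subset_insert ..).trans hEA
  by_cases hbA : b ∈ A
  · exact h.2 A hA (insert_erase hb ▸ insert_subset hbA hEbA)
  · have hF : insert b (A.erase a) ∈ F := by
      refine h.2 _ (by rw [card_insert_erase haA hbA, hA]) fun x hx ↦ ?_
      have := @hEbA x
      have : x ≠ a := fun h ↦ ha (h ▸ hx)
      simp_all
      tauto
    rw [← insert_erase_insert_erase haA hbA]
    exact hS _ hF a b hab (mem_insert_self ..) (by simp [hab.ne])

lemma IsShifted.isTrivialHyp_iff (hS : IsShifted F) (htn : t ≤ n) :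
    IsTrivialHyp n t F ↔ ∀ A ∈ F, initSeg n t ⊆ A := by
  refine ⟨fun ⟨T, hT, hTF⟩ A hA c hc ↦ ?_, fun h ↦ ⟨_, card_initSeg htn, h⟩⟩
  by_contra hcA
  obtain ⟨a, haT, ha⟩ : ∃ a ∈ T, a ∉ initSeg n t := by
    rw [← not_subset]
    intro hsub
    rw [← eq_of_subset_of_card_le hsub (by rw [card_initSeg htn, hT])] at hc
    exact hcA (hTF A hA hc)
  rw [mem_initSeg] at ha hc
  have hca : c < a := Fin.lt_def.2 (by omega)
  simpa [hca.ne'] using hTF _ (hS A hA c a hca (hTF A hA haT) hcA) haT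

lemma IsTrivialHyp.anti {G : Finset (Finset (Fin n))} (hGF : G ⊆ F) (hF : IsTrivialHyp n t F) :
    IsTrivialHyp n t G :=
  let ⟨S, hS, hSF⟩ := hF
  ⟨S, hS, fun e he ↦ hSF e (hGF he)⟩

open Classical in
/-- The edges of `F` whose membership in `F` is already forced by their trace on the first `m`
vertices. -/
noncomputable def determinedPart (k : ℕ) (F : Finset (Finset (Fin n))) (m : ℕ) :
    Finset (Finset (Fin n)) :=
  {A ∈ F | Generates k F (A ∩ initSeg n m)}

lemma mem_determinedPart :
    A ∈ determinedPart k F m ↔ A ∈ F ∧ Generates k F (A ∩ initSeg n m) := by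
  simp [determinedPart]

lemma determinedPart_subset : determinedPart k F m ⊆ F :=
  fun _ hA ↦ (mem_determinedPart.1 hA).1

lemma IsShifted.determinedPart (hS : IsShifted F) (hU : IsKUniform n k F) :
    IsShifted (determinedPart k F m) := by
  intro A hA a b hab hb ha
  obtain ⟨hAF, hgen⟩ := mem_determinedPart.1 hA
  refine mem_determinedPart.2 ⟨hS A hAF a b hab hb ha, ?_⟩
  by_cases hbm : b.val < m
  · have ham : a.val < m := (Fin.lt_def.1 hab).trans hbm
    rw [insert_inter_of_mem (mem_initSeg.2 ham), erase_inter]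
    exact hS.generates hgen hab (by simp [hb, hbm]) (by simp [ha])
  · refine hgen.mono (fun x hx ↦ ?_) ((card_le_card inter_subset_left).trans ?_)
    · have : x ≠ b := by rintro rfl; simp_all
      simp_all
    · rw [card_insert_erase hb ha, hU A hAF]

end Generating

/-! ### The exchange operation -/

section Exchange

variable {n k t m i j : ℕ} {F : Finset (Finset (Fin n))} {E E' A : Finset (Fin n)} {p : Fin n}

/-- `E` is a critical trace of `F` on the first `p + 1` vertices: it generates `F` locally, but no
longer does so once its last vertex `p` is removed. -/
structure IsCritical (k : ℕ) (F : Finset (Finset (Fin n))) (p : Fin n) (E : Finset (Fin n)) :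
    Prop where
  subset : E ⊆ initSeg n (p + 1)
  mem : p ∈ E
  generates : Generates k F E
  not_generates_erase : ¬ Generates k F (E.erase p)

open Classical in
/-- The critical traces with `i` elements. -/
noncomputable def criticalSets (k : ℕ) (F : Finset (Finset (Fin n))) (p : Fin n) (i : ℕ) :
    Finset (Finset (Fin n)) :=
  {E | IsCritical k F p E ∧ #E = i}

/-- The `k`-sets whose trace on the first `m` vertices belongs to `𝒯`. -/
def traceClass (n k m : ℕ) (𝒯 : Finset (Finset (Fin n))) : Finset (Finset (Fin n)) :=
  {A ∈ powersetCard k univ | A ∩ initSeg n m ∈ 𝒯}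

/-- The exchange operation of Ahlswede and Khachatrian: the edges whose trace on the first `p + 1`
vertices lies in `R` are given up, in return for all `k`-sets whose trace is a member of `Q` with
the vertex `p` removed. -/
def exchange (k : ℕ) (F : Finset (Finset (Fin n))) (p : Fin n) (Q R : Finset (Finset (Fin n))) :
    Finset (Finset (Fin n)) :=
  {A ∈ F | A ∩ initSeg n (p + 1) ∉ R} ∪ traceClass n k (p + 1) (Q.image (·.erase p))

/-- A shifted non-trivial `t`-intersecting `k`-uniform hypergraph with the maximum number of
edges. -/
structure IsExtremal (n k t : ℕ) (F : Finset (Finset (Fin n))) : Prop where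
  isNontrivialHyp : IsNontrivialHyp n k t F
  isShifted : IsShifted F
  card_le : ∀ G, IsNontrivialHyp n k t G → #G ≤ #F

lemma mem_criticalSets : E ∈ criticalSets k F p i ↔ IsCritical k F p E ∧ #E = i := by
  simp [criticalSets]

lemma mem_traceClass {𝒯 : Finset (Finset (Fin n))} :
    A ∈ traceClass n k m 𝒯 ↔ #A = k ∧ A ∩ initSeg n m ∈ 𝒯 := by
  simp [traceClass]

lemma card_traceClass {𝒯 : Finset (Finset (Fin n))} {d : ℕ} (hm : m ≤ n)
    (h𝒯 : ∀ E ∈ 𝒯, E ⊆ initSeg n m ∧ #E + d = k) :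
    #(traceClass n k m 𝒯) = #𝒯 * (n - m).choose d := by
  rw [card_eq_sum_card_fiberwise (f := (· ∩ initSeg n m)) (t := 𝒯)
    fun A hA ↦ (mem_traceClass.1 hA).2]
  refine sum_const_nat fun E hE ↦ ?_
  obtain ⟨hEm, hEd⟩ := h𝒯 E hE
  rw [show d = k - #E by omega, ← card_filter_inter_initSeg_eq hm hEm (by omega)]
  congr 1
  ext A
  simp only [mem_filter, mem_traceClass, mem_powersetCard]
  grind

lemma IsCritical.le_card_erase_inter (hkn : k ≤ n) (hn : 2 * k < n + t)
    (hI : IsTIntersectingHyp n t F) (hE : IsCritical k F p E) (hE' : Generates k F E')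
    (hE'p : E' ⊆ initSeg n (p + 1)) (h : IsCritical k F p E' → t < #(E ∩ E')) :
    t ≤ #(E.erase p ∩ E') := by
  rw [erase_inter]
  by_cases hp : p ∈ E'
  · by_cases hgen : Generates k F (E'.erase p)
    · rw [← inter_erase]
      exact hE.generates.le_card_inter hkn hn hI hgen
    · exact (Nat.le_sub_one_of_lt (h ⟨hE'p, hp, hE', hgen⟩)).trans pred_card_le_card_erase
  · rw [erase_eq_of_notMem (fun h ↦ hp (mem_inter.1 h).2)]
    exact hE.generates.le_card_inter hkn hn hI hE'

lemma card_trace_inter_le (S A B : Finset (Fin n)) : #(A ∩ S ∩ (B ∩ S)) ≤ #(A ∩ B) :=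
  card_le_card (inter_subset_inter inter_subset_left inter_subset_left)

lemma isTIntersectingHyp_exchange {Q R : Finset (Finset (Fin n))} (hkn : k ≤ n)
    (hn : 2 * k < n + t) (hI : IsTIntersectingHyp n t F) (hF : determinedPart k F (p + 1) = F)
    (hQ : ∀ E ∈ Q, IsCritical k F p E) (hQR : Disjoint Q R)
    (hinter : ∀ E ∈ Q, ∀ E', IsCritical k F p E' → E' ∉ R → t < #(E ∩ E')) :
    IsTIntersectingHyp n t (exchange k F p Q R) := by
  have key {A B : Finset (Fin n)} (hA : A ∈ exchange k F p Q R)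
      (hB : B ∈ traceClass n k (p + 1) (Q.image (·.erase p))) : t ≤ #(A ∩ B) := by
    refine le_trans ?_ (card_trace_inter_le (initSeg n (p + 1)) A B)
    obtain ⟨E, hE, hEB⟩ := mem_image.1 (mem_traceClass.1 hB).2
    rw [← hEB, inter_comm]
    rcases mem_union.1 hA with hA | hA
    · obtain ⟨hAF, hAR⟩ := mem_filter.1 hA
      rw [← hF] at hAF
      exact (hQ E hE).le_card_erase_inter hkn hn hI (mem_determinedPart.1 hAF).2
        inter_subset_right fun h ↦ hinter E hE _ h hAR
    · obtain ⟨E', hE', hEA⟩ := mem_image.1 (mem_traceClass.1 hA).2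
      have := hinter E hE E' (hQ E' hE') (disjoint_left.1 hQR hE')
      rw [← hEA, erase_inter, inter_erase, erase_idem]
      exact (Nat.le_sub_one_of_lt this).trans pred_card_le_card_erase
  intro A hA B hB
  rcases mem_union.1 hB with hBF | hB'
  · rcases mem_union.1 hA with hAF | hA'
    · exact hI A (mem_filter.1 hAF).1 B (mem_filter.1 hBF).1
    · exact inter_comm B A ▸ key hB hA'
  · exact key hA hB'

lemma isNontrivialHyp_exchange {Q R : Finset (Finset (Fin n))} (hkn : k ≤ n)
    (hn : 2 * k < n + t) (hF : IsNontrivialHyp n k t F)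
    (hdet : determinedPart k F (p + 1) = F) (hp : ¬ IsTrivialHyp n t (determinedPart k F p))
    (hQ : ∀ E ∈ Q, IsCritical k F p E) (hR : ∀ E ∈ R, IsCritical k F p E) (hQR : Disjoint Q R)
    (hinter : ∀ E ∈ Q, ∀ E', IsCritical k F p E' → E' ∉ R → t < #(E ∩ E')) :
    IsNontrivialHyp n k t (exchange k F p Q R) := by
  refine ⟨fun A hA ↦ ?_, isTIntersectingHyp_exchange hkn hn hF.2.1 hdet hQ hQR hinter,
    mt (IsTrivialHyp.anti fun A hA ↦ ?_) hp⟩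
  · rcases mem_union.1 hA with hA | hA
    · exact hF.1 A (mem_filter.1 hA).1
    · exact (mem_traceClass.1 hA).1
  · obtain ⟨hAF, hgen⟩ := mem_determinedPart.1 hA
    refine mem_union_left _ (mem_filter.2 ⟨hAF, fun hAR ↦ (hR _ hAR).not_generates_erase ?_⟩)
    rwa [erase_inter_initSeg_succ]

lemma card_add_card_traceClass_le_card_exchange {Q R : Finset (Finset (Fin n))}
    (hU : IsKUniform n k F) (hdet : determinedPart k F (p + 1) = F)
    (hQ : ∀ E ∈ Q, IsCritical k F p E) :
    #F + #(traceClass n k (p + 1) (Q.image (·.erase p))) ≤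
      #(exchange k F p Q R) + #(traceClass n k (p + 1) R) := by
  have hdisj : Disjoint {A ∈ F | A ∩ initSeg n (p + 1) ∉ R}
      (traceClass n k (p + 1) (Q.image (·.erase p))) := by
    refine disjoint_left.2 fun A hA hA' ↦ ?_
    obtain ⟨E, hE, hEA⟩ := mem_image.1 (mem_traceClass.1 hA').2
    have hAF := (mem_filter.1 hA).1
    rw [← hdet] at hAF
    exact (hQ E hE).not_generates_erase (hEA ▸ (mem_determinedPart.1 hAF).2)
  have hR : #{A ∈ F | A ∩ initSeg n (p + 1) ∈ R} ≤ #(traceClass n k (p + 1) R) :=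
    card_le_card fun A hA ↦
      mem_traceClass.2 ⟨hU A (mem_filter.1 hA).1, (mem_filter.1 hA).2⟩
  have := card_filter_add_card_filter_not (s := F) fun A ↦ A ∩ initSeg n (p + 1) ∈ R
  rw [exchange, card_union_of_disjoint hdisj]
  omega

lemma card_traceClass_image_erase {Q : Finset (Finset (Fin n))} (hQ : Q ⊆ criticalSets k F p i) :
    #(traceClass n k (p + 1) (Q.image (·.erase p))) =
      #Q * (n - (p + 1)).choose (k + 1 - i) := by
  have hQ' (E) (hE : E ∈ Q) := mem_criticalSets.1 (hQ hE)
  rw [card_traceClass p.isLt, card_image_of_injOn]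
  · intro E hE E' hE' h
    rw [← insert_erase (hQ' E hE).1.mem, ← insert_erase (hQ' E' hE').1.mem]
    exact congrArg (insert p) h
  · refine forall_mem_image.2 fun E hE ↦ ?_
    obtain ⟨hcrit, hEi⟩ := hQ' E hE
    have := hcrit.generates.1
    have := card_erase_add_one hcrit.mem
    exact ⟨(erase_subset ..).trans hcrit.subset, by omega⟩

lemma IsExtremal.card_mul_choose_le {Q R : Finset (Finset (Fin n))} (hkn : k ≤ n)
    (hn : 2 * k < n + t) (hF : IsExtremal n k t F) (hdet : determinedPart k F (p + 1) = F)
    (hp : ¬ IsTrivialHyp n t (determinedPart k F p)) (hQ : Q ⊆ criticalSets k F p i)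
    (hR : R ⊆ criticalSets k F p j) (hQR : Disjoint Q R)
    (hinter : ∀ E ∈ Q, ∀ E', IsCritical k F p E' → E' ∉ R → t < #(E ∩ E')) :
    #Q * (n - (p + 1)).choose (k + 1 - i) ≤ #R * (n - (p + 1)).choose (k - j) := by
  have hQ' (E) (hE : E ∈ Q) := (mem_criticalSets.1 (hQ hE)).1
  have hR' (E) (hE : E ∈ R) := mem_criticalSets.1 (hR hE)
  have hmax := hF.card_le _ (isNontrivialHyp_exchange hkn hn hF.isNontrivialHyp hdet hp hQ'
    (fun E hE ↦ (hR' E hE).1) hQR hinter)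
  have := card_add_card_traceClass_le_card_exchange (R := R) hF.isNontrivialHyp.1 hdet hQ'
  have hRcard : #(traceClass n k (p + 1) R) = #R * (n - (p + 1)).choose (k - j) := by
    refine card_traceClass p.isLt fun E hE ↦ ⟨(hR' E hE).1.subset, ?_⟩
    have := (hR' E hE).1.generates.1
    have := (hR' E hE).2
    omega
  rw [card_traceClass_image_erase hQ, hRcard] at this
  omega

end Exchange

section Arithmetic

lemma exists_mem_mul_card_le_mul_card_filter_notMem {α : Type*} [DecidableEq α] {S : Finset α}
    {𝒰 : Finset (Finset α)} {r : ℕ} (hS : S.Nonempty) (h𝒰 : ∀ E ∈ 𝒰, #(S \ E) = r) :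
    ∃ l ∈ S, r * #𝒰 ≤ #S * #{E ∈ 𝒰 | l ∉ E} := by
  have hcount : ∑ l ∈ S, #{E ∈ 𝒰 | l ∉ E} = #𝒰 * r := by
    rw [← sum_const_nat h𝒰]
    simp only [sdiff_eq_filter]
    exact sum_card_bipartiteAbove_eq_sum_card_bipartiteBelow _
  refine exists_le_of_sum_le hS ?_
  rw [sum_const, ← mul_sum, hcount, smul_eq_mul, mul_comm r]

lemma mul_sub_le_mul_succ_of_mul_choose_le {N x q q' r d : ℕ} (hx : x ≤ N) (hq : 0 < q + q')
    (hr : r * (q + q') ≤ (r + d) * q) (h : q * N.choose (x + 1) ≤ q' * N.choose x) :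
    r * (N - x) ≤ d * (x + 1) := by
  have hqx : q * (N - x) ≤ q' * (x + 1) := by
    refine Nat.le_of_mul_le_mul_left ?_ (Nat.choose_pos hx)
    calc N.choose x * (q * (N - x)) = q * (N.choose (x + 1) * (x + 1)) := by
          rw [Nat.choose_succ_right_eq]; ring
      _ = q * N.choose (x + 1) * (x + 1) := by ring
      _ ≤ q' * N.choose x * (x + 1) := Nat.mul_le_mul_right _ h
      _ = N.choose x * (q' * (x + 1)) := by ring
  refine Nat.le_of_mul_le_mul_left ?_ hq
  calc (q + q') * (r * (N - x)) = r * (q + q') * (N - x) := by ring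
    _ ≤ (r + d) * q * (N - x) := Nat.mul_le_mul_right _ hr
    _ = (r + d) * (q * (N - x)) := by ring
    _ ≤ (r + d) * (q' * (x + 1)) := Nat.mul_le_mul_left _ hqx
    _ = (r + d) * q' * (x + 1) := by ring
    _ ≤ (q + q') * d * (x + 1) := Nat.mul_le_mul_right _ (by linarith)
    _ = (q + q') * (d * (x + 1)) := by ring

lemma choose_mul_choose_lt_choose_succ_mul_choose_succ {N x y : ℕ} (h : x + y + 1 < N) :
    N.choose x * N.choose y < N.choose (x + 1) * N.choose (y + 1) := by
  have hpos : 0 < N.choose x * N.choose y :=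
    Nat.mul_pos (Nat.choose_pos (by omega)) (Nat.choose_pos (by omega))
  refine Nat.lt_of_mul_lt_mul_right (a := (x + 1) * (y + 1)) ?_
  calc N.choose x * N.choose y * ((x + 1) * (y + 1))
      < N.choose x * N.choose y * ((N - x) * (N - y)) :=
        Nat.mul_lt_mul_of_pos_left (mul_comm (N - y) _ ▸
          Nat.mul_lt_mul'' (by omega) (by omega)) hpos
    _ = N.choose (x + 1) * (x + 1) * (N.choose (y + 1) * (y + 1)) := by
        rw [Nat.choose_succ_right_eq, Nat.choose_succ_right_eq]; ring
    _ = N.choose (x + 1) * N.choose (y + 1) * ((x + 1) * (y + 1)) := by ring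

end Arithmetic

section CriticalSets

variable {n k t i j : ℕ} {F : Finset (Finset (Fin n))} {E E' A B : Finset (Fin n)} {p l : Fin n}

lemma Generates.lt_card (hkn : k ≤ n) (hn : 2 * k < n + t) (hF : IsNontrivialHyp n k t F)
    (hE : Generates k F E) : t < #E := by
  have hinter (A) (hA : A ∈ F) : t ≤ #(E ∩ A) :=
    hE.le_card_inter hkn hn hF.2.1 (hF.1.generates hA)
  have ht := hE.le_card_inter hkn hn hF.2.1 hE
  rw [inter_self] at ht
  refine ht.lt_of_ne fun hEt ↦ hF.2.2 ⟨E, hEt.symm, fun A hA ↦ inter_eq_left.1 ?_⟩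
  exact eq_of_subset_of_card_le inter_subset_left (hEt ▸ hinter A hA)

lemma IsCritical.card_le_succ (hE : IsCritical k F p E) : #E ≤ p + 1 := by
  simpa [card_initSeg (Nat.succ_le_of_lt p.isLt)] using card_le_card hE.subset

lemma IsCritical.exists_lt_notMem (hE : IsCritical k F p E) (hE' : IsCritical k F p E')
    (h : #(E ∪ E') ≠ p + 1) : ∃ l < p, l ∉ E ∧ l ∉ E' := by
  have hsub := union_subset hE.subset hE'.subset
  obtain ⟨l, hl, hlE⟩ := exists_of_ssubset (hsub.ssubset_of_ne fun h' ↦ h (by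
    rw [h', card_initSeg (Nat.succ_le_of_lt p.isLt)]))
  rw [mem_union, not_or] at hlE
  have hlp : l ≠ p := fun h ↦ hlE.1 (h ▸ hE.mem)
  exact ⟨l, lt_of_le_of_ne (Fin.le_def.2 (Nat.lt_succ_iff.1 (mem_initSeg.1 hl))) hlp, hlE⟩

lemma IsCritical.lt_card_inter (hkn : k ≤ n) (hn : 2 * k < n + t) (hI : IsTIntersectingHyp n t F)
    (hS : IsShifted F) (hE : IsCritical k F p E) (hE' : IsCritical k F p E')
    (h : #E + #E' ≠ p + 1 + t) : t < #(E ∩ E') := by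
  have ht := hE.generates.le_card_inter hkn hn hI hE'.generates
  refine ht.lt_of_ne fun hEE' ↦ ?_
  have := card_union_add_card_inter E E'
  obtain ⟨l, hlp, hlE, hlE'⟩ := hE.exists_lt_notMem hE' (by omega)
  have hshift := (hS.generates hE.generates hlp hE.mem hlE).le_card_inter hkn hn hI hE'.generates
  rw [insert_inter_of_notMem hlE', erase_inter] at hshift
  have := card_erase_lt_of_mem (mem_inter.2 ⟨hE.mem, hE'.mem⟩)
  omega

lemma isCritical_inter_initSeg (hA : A ∈ determinedPart k F (p + 1))
    (hA' : A ∉ determinedPart k F p) : IsCritical k F p (A ∩ initSeg n (p + 1)) := by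
  obtain ⟨hAF, hgen⟩ := mem_determinedPart.1 hA
  have hnot : ¬ Generates k F ((A ∩ initSeg n (p + 1)).erase p) := by
    rw [erase_inter_initSeg_succ]
    exact fun h ↦ hA' (mem_determinedPart.2 ⟨hAF, h⟩)
  refine ⟨inter_subset_right, ?_, hgen, hnot⟩
  by_contra hp
  exact hnot ((erase_eq_of_notMem hp).symm ▸ hgen)

lemma IsCritical.exists_notMem (hE : IsCritical k F p E) :
    ∃ B, #B = k ∧ E.erase p ⊆ B ∧ B ∉ F ∧ p ∉ B := by
  obtain ⟨B, hB, hEB, hBF⟩ : ∃ B, #B = k ∧ E.erase p ⊆ B ∧ B ∉ F := by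
    by_contra! hall
    exact hE.not_generates_erase ⟨card_erase_le.trans hE.generates.1, hall⟩
  refine ⟨B, hB, hEB, hBF, fun hp ↦ hBF (hE.generates.2 B hB ?_)⟩
  rw [← insert_erase hE.mem]
  exact insert_subset hp hEB

lemma IsCritical.not_subset_initSeg (hS : IsShifted F) (hE : IsCritical k F p E) (hB : #B = k)
    (hEB : E.erase p ⊆ B) (hBF : B ∉ F) : ¬ B ⊆ initSeg n p := by
  intro hBp
  have hlt : #(E.erase p) < #B :=
    (card_erase_lt_of_mem hE.mem).trans_le (hE.generates.1.trans hB.ge)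
  obtain ⟨x, hxB, hxE⟩ := exists_mem_notMem_of_card_lt_card hlt
  have hxp : x < p := Fin.lt_def.2 (mem_initSeg.1 (hBp hxB))
  have hgen := hS.generates hE.generates hxp hE.mem fun h ↦ hxE (mem_erase.2 ⟨hxp.ne, h⟩)
  exact hBF (hgen.2 B hB (insert_subset hxB hEB))

lemma IsCritical.exists_succ_le_card_add (hS : IsShifted F) (hE : IsCritical k F p E) :
    ∃ E', IsCritical k F p E' ∧ k + 1 ≤ #E' + (n - (p + 1)) := by
  obtain ⟨B, hB, hEB, hBF, hpB⟩ := hE.exists_notMem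
  have hBp : #(B ∩ initSeg n p) < k := by
    rw [← hB]
    refine card_lt_card (inter_subset_left.ssubset_of_ne fun h ↦ ?_)
    exact hE.not_subset_initSeg hS hB hEB hBF (inter_eq_left.1 h)
  have hpB' : p ∉ B ∩ initSeg n p := fun h ↦ hpB (mem_inter.1 h).1
  have hcard := card_insert_of_notMem hpB'
  have hEsub : E.erase p ⊆ initSeg n p := by
    rw [← inter_eq_left.2 hE.subset, erase_inter_initSeg_succ]
    exact inter_subset_right
  refine ⟨insert p (B ∩ initSeg n p), ⟨insert_subset (by simp) fun x hx ↦ ?_,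
    mem_insert_self .., hE.generates.mono ?_ (by omega), ?_⟩, ?_⟩
  · exact mem_initSeg.2 (Nat.lt_succ_of_lt (mem_initSeg.1 (mem_inter.1 hx).2))
  · nth_rw 1 [← insert_erase hE.mem]
    exact insert_subset_insert _ (subset_inter hEB hEsub)
  · rw [erase_insert hpB']
    exact fun h ↦ hBF (h.2 B hB inter_subset_left)
  · have hsdiff : insert p (B \ initSeg n p) ⊆ (initSeg n p)ᶜ :=
      insert_subset (by simp) fun x hx ↦ mem_compl.2 (mem_sdiff.1 hx).2
    have := card_le_card hsdiff
    rw [card_insert_of_notMem fun h ↦ hpB (mem_sdiff.1 h).1, card_compl, Fintype.card_fin,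
      card_initSeg p.isLt.le] at this
    have := card_inter_add_card_sdiff B (initSeg n p)
    omega

end CriticalSets

section Pushing

variable {n k t s i j : ℕ} {F : Finset (Finset (Fin n))} {E : Finset (Fin n)} {p l : Fin n}

lemma disjoint_criticalSets (hij : i ≠ j) :
    Disjoint (criticalSets k F p i) (criticalSets k F p j) :=
  disjoint_left.2 fun _ hi hj ↦ hij ((mem_criticalSets.1 hi).2.symm.trans (mem_criticalSets.1 hj).2)

lemma IsExtremal.card_criticalSets_mul_choose_le (hkn : k ≤ n) (hn : 2 * k < n + t)
    (hF : IsExtremal n k t F) (hdet : determinedPart k F (p + 1) = F)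
    (hp : ¬ IsTrivialHyp n t (determinedPart k F p)) (hij : i + j = p + 1 + t) (hne : i ≠ j) :
    #(criticalSets k F p i) * (n - (p + 1)).choose (k + 1 - i) ≤
      #(criticalSets k F p j) * (n - (p + 1)).choose (k - j) := by
  refine hF.card_mul_choose_le hkn hn hdet hp subset_rfl subset_rfl (disjoint_criticalSets hne)
    fun E hEi E' hE' hE'j ↦ ?_
  obtain ⟨hE, rfl⟩ := mem_criticalSets.1 hEi
  refine hE.lt_card_inter hkn hn hF.isNontrivialHyp.2.1 hF.isShifted hE' fun h ↦ hE'j ?_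
  exact mem_criticalSets.2 ⟨hE', by omega⟩

lemma IsExtremal.card_add_card_eq (hkn : k ≤ n) (hn : 2 * k + 1 < n + t)
    (hF : IsExtremal n k t F) (hdet : determinedPart k F (p + 1) = F)
    (hp : ¬ IsTrivialHyp n t (determinedPart k F p)) (hE : IsCritical k F p E)
    (hroom : k + 1 ≤ #E + (n - (p + 1))) : #E + #E = p + 1 + t := by
  by_contra hne
  have hEk := hE.generates.1
  have hEp := hE.card_le_succ
  obtain ⟨j, hj⟩ : ∃ j, #E + j = p + 1 + t := ⟨p + 1 + t - #E, by omega⟩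
  have hle := hF.card_criticalSets_mul_choose_le hkn (by omega) hdet hp hj (by omega)
  have hle' := hF.card_criticalSets_mul_choose_le hkn (by omega) hdet hp (add_comm _ j ▸ hj)
    (by omega)
  have hEcard : 0 < #(criticalSets k F p #E) := card_pos.2 ⟨E, mem_criticalSets.2 ⟨hE, rfl⟩⟩
  have hjcard : 0 < #(criticalSets k F p j) := by
    refine Nat.pos_of_mul_pos_right ((Nat.mul_pos hEcard (Nat.choose_pos ?_)).trans_le hle)
    omega
  obtain ⟨E', hE'j⟩ := card_pos.1 hjcard
  obtain ⟨hE', rfl⟩ := mem_criticalSets.1 hE'j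
  have hE'k := hE'.generates.1
  rw [Nat.sub_add_comm hEk] at hle
  rw [Nat.sub_add_comm hE'k] at hle'
  have hlt := choose_mul_choose_lt_choose_succ_mul_choose_succ (N := n - (p + 1)) (x := k - #E)
    (y := k - #E') (by omega)
  refine hlt.not_ge (Nat.le_of_mul_le_mul_left ?_ (Nat.mul_pos hEcard hjcard))
  rw [mul_mul_mul_comm]
  exact (Nat.mul_le_mul hle hle').trans_eq (by ring)

lemma IsExtremal.card_filter_notMem_mul_choose_le (hkn : k ≤ n) (hn : 2 * k < n + t)
    (hF : IsExtremal n k t F) (hdet : determinedPart k F (p + 1) = F)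
    (hp : ¬ IsTrivialHyp n t (determinedPart k F p)) (hi : i + i = p + 1 + t) (hl : l < p) :
    #{E ∈ criticalSets k F p i | l ∉ E} * (n - (p + 1)).choose (k + 1 - i) ≤
      #{E ∈ criticalSets k F p i | ¬ l ∉ E} * (n - (p + 1)).choose (k - i) := by
  refine hF.card_mul_choose_le hkn hn hdet hp (filter_subset ..) (filter_subset ..)
    (disjoint_filter_filter_not ..) fun E hEl E' hE' hE'R ↦ ?_
  obtain ⟨hEi, hlE⟩ := mem_filter.1 hEl
  obtain ⟨hE, rfl⟩ := mem_criticalSets.1 hEi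
  by_cases hcard : #E' = #E
  · have hlE' : l ∉ E' := fun h ↦ hE'R (mem_filter.2 ⟨mem_criticalSets.2 ⟨hE', hcard⟩, by simpa⟩)
    have hsub : E ∪ E' ⊆ (initSeg n (p + 1)).erase l :=
      subset_erase.2 ⟨union_subset hE.subset hE'.subset, by simp [hlE, hlE']⟩
    have := card_le_card hsub
    rw [card_erase_of_mem (mem_initSeg.2 (Nat.lt_succ_of_lt hl)),
      card_initSeg (Nat.succ_le_of_lt p.isLt)] at this
    have := card_union_add_card_inter E E'
    omega
  · exact hE.lt_card_inter hkn hn hF.isNontrivialHyp.2.1 hF.isShifted hE' (by omega)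

lemma IsCritical.card_initSeg_sdiff (hE : IsCritical k F p E) :
    #(initSeg n p \ E) = p + 1 - #E := by
  have hsdiff : initSeg n p \ E = initSeg n (p + 1) \ E := by
    have (x) (hx : x ∉ E) : x.val ≠ p := fun h ↦ hx (Fin.ext h ▸ hE.mem)
    ext x
    simp only [mem_sdiff, mem_initSeg]
    grind
  rw [hsdiff, card_sdiff_of_subset hE.subset, card_initSeg (Nat.succ_le_of_lt p.isLt)]

lemma add_sub_one_mul_lt_mul_sub {n t r x : ℕ} (ht : 1 ≤ t) (hr : 1 ≤ r)
    (hn : (t + 1) * (r + x + 1) + 1 ≤ n) :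
    (t + r - 1) * (x + 1) < r * (n - (t + 2 * r) - x) := by
  obtain ⟨t, rfl⟩ := Nat.exists_eq_add_of_le' ht
  obtain ⟨r, rfl⟩ := Nat.exists_eq_add_of_le' hr
  have hle : t * (r + x + 1) + x + 2 ≤ n - (t + 1 + 2 * (r + 1)) - x := by
    ring_nf at hn ⊢
    omega
  calc (t + 1 + (r + 1) - 1) * (x + 1) = (t + r + 1) * (x + 1) := by congr 1; omega
    _ < (r + 1) * (t * (r + x + 1) + x + 2) := by nlinarith [Nat.zero_le (t * r * (r + x + 1))]
    _ ≤ _ := Nat.mul_le_mul_left _ hle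

lemma IsExtremal.card_add_card_ne (ht : 1 ≤ t) (hn : (t + 1) * (s + 1) + 1 ≤ n)
    (hF : IsExtremal n (t + s) t F) (hdet : determinedPart (t + s) F (p + 1) = F)
    (hp : ¬ IsTrivialHyp n t (determinedPart (t + s) F p)) (hE : IsCritical (t + s) F p E) :
    #E + #E ≠ p + 1 + t := by
  intro hEp
  have hts : s ≤ t * s := Nat.le_mul_of_pos_left s ht
  have hn' : 2 * (t + s) + 1 < n + t := by nlinarith
  have htE := hE.generates.lt_card (by omega) (by omega) hF.isNontrivialHyp
  obtain ⟨r, hr⟩ := Nat.exists_eq_add_of_lt htE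
  obtain ⟨x, rfl⟩ := Nat.exists_eq_add_of_le (show r + 1 ≤ s by have := hE.generates.1; omega)
  have hpcard : #(initSeg n p) = p := card_initSeg p.isLt.le
  set 𝒰 := criticalSets (t + (r + 1 + x)) F p #E
  obtain ⟨l, hlp, hl⟩ := exists_mem_mul_card_le_mul_card_filter_notMem (S := initSeg n p) (𝒰 := 𝒰)
    (r := r + 1) (card_pos.1 (by omega)) fun E' hE' ↦ by
      obtain ⟨hcrit, hcard⟩ := mem_criticalSets.1 hE'
      rw [hcrit.card_initSeg_sdiff]
      omega
  have hpush := hF.card_filter_notMem_mul_choose_le (by omega) (by omega) hdet hp hEp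
    (Fin.lt_def.2 (mem_initSeg.1 hlp))
  rw [show t + (r + 1 + x) + 1 - #E = x + 1 by omega,
    show t + (r + 1 + x) - #E = x by omega] at hpush
  have hsum := card_filter_add_card_filter_not (s := 𝒰) (l ∉ ·)
  have h𝒰pos : 0 < #𝒰 := card_pos.2 ⟨E, mem_criticalSets.2 ⟨hE, rfl⟩⟩
  rw [hpcard, show (p : ℕ) = r + 1 + (t + (r + 1) - 1) by omega, ← hsum] at hl
  have hle := mul_sub_le_mul_succ_of_mul_choose_le (by omega) (hsum ▸ h𝒰pos) hl hpush
  have hlt := add_sub_one_mul_lt_mul_sub ht (Nat.le_add_left 1 r) hn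
  rw [show n - (t + 2 * (r + 1)) = n - (p + 1) by omega] at hlt
  exact hlt.not_ge hle

lemma IsExtremal.isTrivialHyp_determinedPart (ht : 1 ≤ t) (hn : (t + 1) * (s + 1) + 1 ≤ n)
    (hF : IsExtremal n (t + s) t F) (hdet : determinedPart (t + s) F (p + 1) = F)
    (hdet' : determinedPart (t + s) F p ≠ F) : IsTrivialHyp n t (determinedPart (t + s) F p) := by
  by_contra hp
  have hts : s ≤ t * s := Nat.le_mul_of_pos_left s ht
  have hn' : 2 * (t + s) + 1 < n + t := by nlinarith
  obtain ⟨A, hA, hA'⟩ := exists_of_ssubset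
    (determinedPart_subset.ssubset_of_ne hdet')
  obtain ⟨E, hE, hroom⟩ :=
    (isCritical_inter_initSeg (hdet.symm ▸ hA) hA').exists_succ_le_card_add hF.isShifted
  exact hF.card_add_card_ne ht hn hdet hp hE
    (hF.card_add_card_eq (by omega) hn' hdet hp hE hroom)

end Pushing

/-! ### The structure of extremal families -/

section Structure

variable {n k t s m : ℕ} {F : Finset (Finset (Fin n))} {E A : Finset (Fin n)} {p y : Fin n}

lemma Generates.initSeg_subset (hkn : k < n) (hE : Generates k F E) (hEp : E ⊆ initSeg n p)
    (hp : ∀ A ∈ determinedPart k F p, initSeg n t ⊆ A) : initSeg n t ⊆ E :=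
  subset_of_forall_subset_of_superset hE.1 (by simpa using hkn) fun B hBk hEB ↦
    hp B (mem_determinedPart.2 ⟨hE.2 B hBk hEB,
      hE.mono (subset_inter hEB hEp) ((card_le_card inter_subset_left).trans hBk.le)⟩)

lemma exists_inter_initSeg_eq_erase (hkn : k < n) (hS : IsShifted F)
    (hdet : determinedPart k F (p + 1) = F) (hp : ∀ A ∈ determinedPart k F p, initSeg n t ⊆ A)
    (hA : A ∈ F) (hAt : ¬ initSeg n t ⊆ A) :
    ∃ y ∈ initSeg n t, A ∩ initSeg n (p + 1) = (initSeg n (p + 1)).erase y := by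
  have hE := isCritical_inter_initSeg (hdet.symm ▸ hA) (mt (hp A) hAt)
  set E := A ∩ initSeg n (p + 1)
  obtain ⟨y, hyt, hyA⟩ := not_subset.1 hAt
  have hyE : y ∉ E := fun h ↦ hyA (mem_inter.1 h).1
  refine ⟨y, hyt, Subset.antisymm (subset_erase.2 ⟨hE.subset, hyE⟩) fun c hc ↦ ?_⟩
  obtain ⟨hcy, hcp⟩ := mem_erase.1 hc
  by_contra hcE
  have hcp : c < p := lt_of_le_of_ne (Fin.le_def.2 (Nat.lt_succ_iff.1 (mem_initSeg.1 hcp)))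
    fun h ↦ hcE (h ▸ hE.mem)
  have hsub : insert c (E.erase p) ⊆ initSeg n p := by
    rw [erase_inter_initSeg_succ]
    exact insert_subset (mem_initSeg.2 hcp) inter_subset_right
  have hy := (hS.generates hE.generates hcp hE.mem hcE).initSeg_subset hkn hsub hp hyt
  rcases mem_insert.1 hy with rfl | hy
  · exact hcy rfl
  · exact hyE (mem_of_mem_erase hy)

lemma card_erase_initSeg (hm : m ≤ n) (hy : y.val < m) : #((initSeg n m).erase y) = m - 1 := by
  rw [card_erase_of_mem (mem_initSeg.2 hy), card_initSeg hm]

lemma card_filter_initSeg_subset_add_le (hkn : k ≤ n) (hn : 2 * k < n + t) (htk : t ≤ k)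
    (htm : t ≤ m) (hmn : m ≤ n) (hU : IsKUniform n k F) (hI : IsTIntersectingHyp n t F)
    (hy : y.val < t) (hgen : Generates k F ((initSeg n m).erase y)) :
    #{A ∈ F | initSeg n t ⊆ A} + (n - m).choose (k - t) ≤ (n - t).choose (k - t) := by
  have htn : t ≤ n := htm.trans hmn
  have hcard {m : ℕ} (htm : t ≤ m) (hmn : m ≤ n) :
      #(traceClass n k m {initSeg n t}) = (n - m).choose (k - t) := by
    rw [card_traceClass hmn (d := k - t), card_singleton, one_mul]
    simp only [mem_singleton, forall_eq, card_initSeg htn]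
    exact ⟨fun x hx ↦ mem_initSeg.2 ((mem_initSeg.1 hx).trans_le htm), by omega⟩
  rw [← hcard htm hmn, ← hcard le_rfl htn, ← card_union_of_disjoint]
  · refine card_le_card fun A hA ↦ mem_traceClass.2 ?_
    rw [mem_singleton, inter_eq_right]
    rcases mem_union.1 hA with hA | hA
    · exact ⟨hU A (mem_filter.1 hA).1, (mem_filter.1 hA).2⟩
    · obtain ⟨hAk, hAm⟩ := mem_traceClass.1 hA
      exact ⟨hAk, (mem_singleton.1 hAm).symm.trans_subset inter_subset_left⟩
  · refine disjoint_left.2 fun A hA hA' ↦ ?_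
    have hAm := mem_singleton.1 (mem_traceClass.1 hA').2
    have hle := hgen.le_card_inter hkn hn hI (hU.generates (mem_filter.1 hA).1)
    rw [erase_inter, inter_comm, hAm, card_erase_initSeg htn hy] at hle
    omega

lemma card_filter_not_initSeg_subset_le (htm : t ≤ m) (hm : 1 ≤ m) (hmk : m ≤ k + 1) (hmn : m ≤ n)
    (hU : IsKUniform n k F)
    (h : ∀ A ∈ F, ¬ initSeg n t ⊆ A →
      ∃ y ∈ initSeg n t, A ∩ initSeg n m = (initSeg n m).erase y) :
    #{A ∈ F | ¬ initSeg n t ⊆ A} ≤ t * (n - m).choose (k + 1 - m) := by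
  set 𝒯 := (initSeg n t).image (initSeg n m).erase
  calc #{A ∈ F | ¬ initSeg n t ⊆ A} ≤ #(traceClass n k m 𝒯) := card_le_card fun A hA ↦ by
        obtain ⟨hAF, hAt⟩ := mem_filter.1 hA
        obtain ⟨y, hy, hAy⟩ := h A hAF hAt
        exact mem_traceClass.2 ⟨hU A hAF, mem_image.2 ⟨y, hy, hAy.symm⟩⟩
    _ = #𝒯 * (n - m).choose (k + 1 - m) := by
        refine card_traceClass hmn (forall_mem_image.2 fun y hy ↦ ⟨erase_subset .., ?_⟩)
        rw [card_erase_initSeg hmn ((mem_initSeg.1 hy).trans_le htm)]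
        omega
    _ ≤ t * (n - m).choose (k + 1 - m) :=
        Nat.mul_le_mul_right _ (card_image_le.trans_eq (card_initSeg (htm.trans hmn)))

lemma IsNontrivialHyp.exists_determinedPart_ne_succ (hkn : k ≤ n) (hn : 2 * k < n + t)
    (htn : t ≤ n) (hF : IsNontrivialHyp n k t F) :
    ∃ p : Fin n, determinedPart k F p ≠ F ∧ determinedPart k F (p + 1) = F := by
  have hfull (m : ℕ) (hm : n ≤ m) : determinedPart k F m = F := by
    refine Subset.antisymm determinedPart_subset fun A hA ↦ mem_determinedPart.2 ⟨hA, ?_⟩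
    rw [inter_eq_left.2 fun x _ ↦ mem_initSeg.2 (x.isLt.trans_le hm)]
    exact hF.1.generates hA
  have hzero : determinedPart k F 0 ≠ F := by
    intro h
    have hne : F.Nonempty := by
      rw [nonempty_iff_ne_empty]
      rintro rfl
      exact hF.2.2 ⟨initSeg n t, card_initSeg htn, by simp⟩
    obtain ⟨A, hA⟩ := hne
    have := (mem_determinedPart.1 (h.symm ▸ hA)).2.lt_card hkn hn hF
    simp [initSeg] at this
  obtain ⟨p, hp, hp'⟩ := Nat.exists_not_and_succ_of_not_zero_of_exists
    (p := fun m ↦ determinedPart k F m = F) hzero ⟨n, hfull n le_rfl⟩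
  exact ⟨⟨p, not_le.1 (mt (hfull p) hp)⟩, hp, hp'⟩

theorem IsExtremal.exists_card_add_choose_le (ht : 1 ≤ t) (hn : (t + 1) * (s + 1) + 1 ≤ n)
    (hF : IsExtremal n (t + s) t F) :
    ∃ m, t + 2 ≤ m ∧ m ≤ t + s + 1 ∧
      #F + (n - m).choose s ≤ (n - t).choose s + t * (n - m).choose (t + s + 1 - m) := by
  have hts : s ≤ t * s := Nat.le_mul_of_pos_left s ht
  have hn' : 2 * (t + s) + 1 < n + t := by nlinarith
  obtain ⟨hU, hI, hT⟩ := hF.isNontrivialHyp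
  have htn : t ≤ n := by omega
  obtain ⟨p, hp, hdet⟩ := hF.isNontrivialHyp.exists_determinedPart_ne_succ (by omega)
    (by omega) htn
  have hpt := ((hF.isShifted.determinedPart hU).isTrivialHyp_iff htn).1
    (hF.isTrivialHyp_determinedPart ht hn hdet hp)
  have htrace (A) (hA : A ∈ F) (hAt : ¬ initSeg n t ⊆ A) := exists_inter_initSeg_eq_erase
    (by omega) hF.isShifted hdet hpt hA hAt
  obtain ⟨A, hA, hAt⟩ : ∃ A ∈ F, ¬ initSeg n t ⊆ A := by
    by_contra! h
    exact hT ((hF.isShifted.isTrivialHyp_iff htn).2 h)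
  obtain ⟨y, hyt, hAy⟩ := htrace A hA hAt
  rw [mem_initSeg] at hyt
  have hgen : Generates (t + s) F ((initSeg n (p + 1)).erase y) :=
    hAy ▸ (mem_determinedPart.1 (hdet.symm ▸ hA)).2
  have hlt := hgen.lt_card (by omega) (by omega) hF.isNontrivialHyp
  have hyp : y.val < p + 1 := by
    have := (card_le_card (erase_subset y (initSeg n (p + 1)))).trans_eq (card_initSeg p.isLt)
    omega
  have hcard := card_erase_initSeg p.isLt hyp
  have hle := hgen.1
  rw [Nat.succ_eq_add_one] at hcard
  have hcontain := card_filter_initSeg_subset_add_le (m := p + 1) (by omega) (by omega)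
    (Nat.le_add_right t s) (by omega) p.isLt hU hI hyt hgen
  have hrest := card_filter_not_initSeg_subset_le (m := p + 1) (k := t + s) (by omega) (by omega)
    (by omega) p.isLt hU htrace
  have hsum := card_filter_add_card_filter_not (s := F) (initSeg n t ⊆ ·)
  rw [Nat.add_sub_cancel_left] at hcontain
  exact ⟨p + 1, by omega, by omega, by omega⟩

end Structure

/-! ### Shifting -/

section Shifting

open UV
open scoped FinsetFamily Pointwise

variable {n k t m : ℕ} {F G : Finset (Finset (Fin n))} {A V e : Finset (Fin n)} {a b c d : Fin n}

lemma compress_singleton_of_mem_of_notMem (hb : b ∈ e) (ha : a ∉ e) :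
    compress {a} {b} e = insert a (e.erase b) := by
  have hab : a ≠ b := fun h ↦ ha (h ▸ hb)
  rw [compress_of_disjoint_of_le (by simpa using ha) (by simpa using hb)]
  ext x
  simp only [mem_sdiff, sup_eq_union, mem_union, mem_singleton, mem_insert, mem_erase]
  grind

lemma compress_singleton_eq_or (a b : Fin n) (e : Finset (Fin n)) :
    compress {a} {b} e = e ∨ b ∈ e ∧ a ∉ e ∧ compress {a} {b} e = insert a (e.erase b) := by
  by_cases h : b ∈ e ∧ a ∉ e
  · exact Or.inr ⟨h.1, h.2, compress_singleton_of_mem_of_notMem h.1 h.2⟩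
  · exact Or.inl (if_neg fun h' ↦ h ⟨by simpa using h'.2, by simpa using h'.1⟩)

lemma mem_compress_singleton_iff {x : Fin n} (ha : x ≠ a) (hb : x ≠ b) :
    x ∈ compress {a} {b} e ↔ x ∈ e := by
  rcases compress_singleton_eq_or a b e with h | ⟨-, -, h⟩ <;> simp [h, ha, hb]

lemma mem_compression_singleton : A ∈ 𝓒 {a} {b} F ↔
    A ∈ F ∧ (b ∈ A → a ∉ A → insert a (A.erase b) ∈ F) ∨
      A ∉ F ∧ a ∈ A ∧ b ∉ A ∧ insert b (A.erase a) ∈ F := by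
  rw [mem_compression]
  refine or_congr (and_congr_right fun hA ↦ ?_) (and_congr_right fun hA ↦ ⟨?_, ?_⟩)
  · by_cases h : b ∈ A ∧ a ∉ A
    · rw [compress_singleton_of_mem_of_notMem h.1 h.2]
      tauto
    · rw [show compress {a} {b} A = A by
        have := compress_singleton_eq_or a b A
        tauto]
      tauto
  · rintro ⟨e, he, rfl⟩
    rcases compress_singleton_eq_or a b e with h | ⟨hb, ha, h⟩
    · exact absurd (by rwa [h]) hA
    · rw [h, insert_erase_insert_erase hb ha]
      have hab : b ≠ a := fun h ↦ ha (h ▸ hb)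
      exact ⟨mem_insert_self .., by simp [hab], he⟩
  · rintro ⟨ha, hb, h⟩
    have hab : a ≠ b := fun h ↦ hb (h ▸ ha)
    refine ⟨_, h, ?_⟩
    rw [compress_singleton_of_mem_of_notMem (mem_insert_self ..) (by simp [hab]),
      insert_erase_insert_erase ha hb]

lemma insert_erase_mem_of_isCompressed (hF : IsCompressed {a} {b} F) (hA : A ∈ F) (hb : b ∈ A)
    (ha : a ∉ A) : insert a (A.erase b) ∈ F := by
  have := compress_mem_compression (u := {a}) (v := {b}) hA
  rwa [hF, compress_singleton_of_mem_of_notMem hb ha] at this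

lemma isKUniform_compression (hF : IsKUniform n k F) : IsKUniform n k (𝓒 {a} {b} F) :=
  fun _ he ↦ Set.Sized.uvCompression (by simp) hF he

lemma isTIntersectingHyp_compression (hF : IsTIntersectingHyp n t F) :
    IsTIntersectingHyp n t (𝓒 {a} {b} F) := by
  have key {A B : Finset (Fin n)} (ha : a ∈ A) (hb : b ∉ A) (hA : insert b (A.erase a) ∈ F)
      (hB : B ∈ F) (hB' : b ∈ B → a ∉ B → insert a (B.erase b) ∈ F) : t ≤ #(A ∩ B) := by
    by_cases hbB : b ∈ B
    · by_cases haB : a ∈ B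
      · have h := hF _ hA B hB
        rwa [insert_inter_of_mem hbB, erase_inter,
          card_insert_erase (mem_inter.2 ⟨ha, haB⟩) (by simp [hb])] at h
      · refine (hF _ hA _ (hB' hbB haB)).trans (card_le_card fun x hx ↦ ?_)
        simp only [mem_inter, mem_insert, mem_erase] at hx ⊢
        grind
    · refine (hF _ hA B hB).trans (card_le_card fun x hx ↦ ?_)
      simp only [mem_inter, mem_insert, mem_erase] at hx ⊢
      grind
  intro A hA B hB
  rcases mem_compression_singleton.1 hA with ⟨hA, hA'⟩ | ⟨-, haA, hbA, hA⟩ <;>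
    rcases mem_compression_singleton.1 hB with ⟨hB, hB'⟩ | ⟨-, haB, hbB, hB⟩
  · exact hF A hA B hB
  · exact inter_comm B A ▸ key haB hbB hB hA hA'
  · exact key haA hbA hA hB hB'
  · have h := hF _ hA _ hB
    rw [← insert_inter_distrib, erase_inter, inter_erase, erase_idem,
      card_insert_erase (mem_inter.2 ⟨haA, haB⟩) (by simp [hbA])] at h
    exact h

/-- The total of the vertex labels over all edges, the quantity that shifting decreases. -/
def labelSum (F : Finset (Finset (Fin n))) : ℕ := ∑ A ∈ F, ∑ x ∈ A, x.val

lemma sum_val_insert_erase_lt (hab : a < b) (hb : b ∈ A) (ha : a ∉ A) :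
    ∑ x ∈ insert a (A.erase b), x.val < ∑ x ∈ A, x.val := by
  rw [sum_insert (mt mem_of_mem_erase ha), ← add_sum_erase A _ hb]
  exact Nat.add_lt_add_right hab _

lemma labelSum_compression_lt (hab : a < b) (hF : ¬ IsCompressed {a} {b} F) :
    labelSum (𝓒 {a} {b} F) < labelSum F := by
  have hmoved {A} (hA : A ∈ {A ∈ F | compress {a} {b} A ∉ F}) :
      ∑ x ∈ compress {a} {b} A, x.val < ∑ x ∈ A, x.val := by
    obtain ⟨hAF, hA⟩ := mem_filter.1 hA
    rcases compress_singleton_eq_or a b A with h | ⟨hb, ha, h⟩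
    · exact absurd (h.symm ▸ hAF) hA
    · rw [h]
      exact sum_val_insert_erase_lt hab hb ha
  have hne : ({A ∈ F | compress {a} {b} A ∉ F}).Nonempty := by
    by_contra h
    rw [not_nonempty_iff_eq_empty, filter_eq_empty_iff] at h
    exact hF (eq_of_subset_of_card_le (fun A hA ↦
      mem_compression.2 (Or.inl ⟨hA, not_not.1 (h hA)⟩)) (card_compression ..).le).symm
  rw [labelSum, labelSum, ← sum_filter_add_sum_filter_not F (compress {a} {b} · ∈ F), compression,
    sum_union compress_disjoint, filter_image, sum_image compress_injOn]
  exact Nat.add_lt_add_left (sum_lt_sum_of_nonempty hne fun A hA ↦ hmoved hA) _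

lemma exists_isCompressed_of_compression {P : Finset (Finset (Fin n)) → Prop} (hF : P F) :
    ∃ G, P G ∧ ∀ a b, a < b → P (𝓒 {a} {b} G) → IsCompressed {a} {b} G := by
  classical
  obtain ⟨G, hG, hmin⟩ := exists_min_image {G | P G} labelSum ⟨F, by simpa using hF⟩
  refine ⟨G, by simpa using hG, fun a b hab hP ↦ ?_⟩
  by_contra h
  exact (hmin _ (by simpa using hP)).not_gt (labelSum_compression_lt hab h)

lemma isShifted_of_isCompressed (hF : ∀ a b, a < b → IsCompressed {a} {b} F) : IsShifted F :=
  fun _ he a b hab ↦ insert_erase_mem_of_isCompressed (hF a b hab) he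

lemma card_filter_subset_le_card_filter_compression (hab : a < b) :
    #{A ∈ F | A ⊆ initSeg n m} ≤ #{A ∈ 𝓒 {a} {b} F | A ⊆ initSeg n m} := by
  rw [← card_compression {a} {b} {A ∈ F | A ⊆ initSeg n m}]
  refine card_le_card fun A hA ↦ ?_
  simp only [mem_compression_singleton, mem_filter] at hA ⊢
  rcases hA with ⟨⟨hA, hAm⟩, h⟩ | ⟨hA, haA, hbA, h, hm⟩
  · exact ⟨Or.inl ⟨hA, fun hb ha ↦ (h hb ha).1⟩, hAm⟩
  · have hbm := mem_initSeg.1 (hm (mem_insert_self ..))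
    have hAm : A ⊆ initSeg n m := fun x hx ↦ by
      rcases eq_or_ne x a with rfl | hxa
      · exact mem_initSeg.2 ((Fin.lt_def.1 hab).trans hbm)
      · exact hm (mem_insert_of_mem (mem_erase.2 ⟨hxa, hx⟩))
    exact ⟨Or.inr ⟨fun h ↦ hA ⟨h, hAm⟩, haA, hbA, h⟩, hAm⟩

lemma not_isTrivialHyp_of_lt_card_filter_subset (hk : k < n) (htk : t ≤ k)
    (hF : IsKUniform n k F) (h : k + 1 - t < #{A ∈ F | A ⊆ initSeg n (k + 1)}) :
    ¬ IsTrivialHyp n t F := by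
  rintro ⟨T, hT, hTF⟩
  obtain ⟨A, hA⟩ := card_pos.1 (Nat.zero_lt_of_lt h)
  have hTS : T ⊆ initSeg n (k + 1) := (hTF A (mem_filter.1 hA).1).trans (mem_filter.1 hA).2
  have hsub : {A ∈ F | A ⊆ initSeg n (k + 1)} ⊆
      (initSeg n (k + 1) \ T).image (initSeg n (k + 1)).erase := fun A hA ↦ by
    obtain ⟨hAF, hAS⟩ := mem_filter.1 hA
    obtain ⟨x, hx⟩ : ∃ x, initSeg n (k + 1) \ A = {x} := by
      rw [← card_eq_one, card_sdiff_of_subset hAS, card_initSeg hk, hF A hAF]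
      omega
    have hxS : x ∈ initSeg n (k + 1) \ A := hx ▸ mem_singleton_self x
    refine mem_image.2 ⟨x, sdiff_subset_sdiff Subset.rfl (hTF A hAF) hxS, ?_⟩
    rw [← sdiff_singleton_eq_erase, ← hx, Finset.sdiff_sdiff_eq_self hAS]
  have := (card_le_card hsub).trans card_image_le
  rw [card_sdiff_of_subset hTS, card_initSeg hk, hT] at this
  omega

lemma exists_isShifted_of_lt_card_filter_subset (hk : k < n) (htk : t ≤ k)
    (hF : IsKUniform n k F) (hI : IsTIntersectingHyp n t F)
    (h : k + 1 - t < #{A ∈ F | A ⊆ initSeg n (k + 1)}) :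
    ∃ G, IsNontrivialHyp n k t G ∧ IsShifted G ∧ #G = #F := by
  obtain ⟨G, ⟨hGU, hGI, hGF, hG⟩, hcomp⟩ := exists_isCompressed_of_compression
    (P := fun G ↦ IsKUniform n k G ∧ IsTIntersectingHyp n t G ∧ #G = #F ∧
      k + 1 - t < #{A ∈ G | A ⊆ initSeg n (k + 1)}) ⟨hF, hI, rfl, h⟩
  refine ⟨G, ⟨hGU, hGI, not_isTrivialHyp_of_lt_card_filter_subset hk htk hGU hG⟩,
    isShifted_of_isCompressed fun a b hab ↦ hcomp a b hab ⟨isKUniform_compression hGU,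
      isTIntersectingHyp_compression hGI, ?_, ?_⟩, hGF⟩
  · rw [card_compression, hGF]
  · exact hG.trans_le (card_filter_subset_le_card_filter_compression hab)

/-- Every edge contains the set `V` up to one of its vertices `a` and `b`. A shift replacing `b` by
`a` can make a non-trivial family trivial only if the family has this form. -/
def IsNearlyTrivial (V : Finset (Fin n)) (a b : Fin n) (F : Finset (Finset (Fin n))) : Prop :=
  ∀ A ∈ F, V.erase a ⊆ A ∨ V.erase b ⊆ A

lemma IsNearlyTrivial.symm (hF : IsNearlyTrivial V a b F) : IsNearlyTrivial V b a F :=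
  fun A hA ↦ (hF A hA).symm

lemma IsNearlyTrivial.isTrivialHyp (hF : IsNearlyTrivial V a b F) (hV : #V = t + 1) (hb : b ∈ V)
    (ha : ∀ A ∈ F, a ∈ A) : IsTrivialHyp n t F := by
  refine ⟨V.erase b, by rw [card_erase_of_mem hb, hV, Nat.add_sub_cancel], fun A hA ↦ ?_⟩
  rcases hF A hA with h | h
  · exact (erase_subset b V).trans ((insert_erase_subset a V).trans (insert_subset (ha A hA) h))
  · exact h

lemma IsNearlyTrivial.compression (hF : IsNearlyTrivial V a b F) (hd : d ∉ V) :
    IsNearlyTrivial V a b (𝓒 {c} {d} F) := by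
  intro A hA
  rcases mem_compression_singleton.1 hA with ⟨hA, -⟩ | ⟨-, -, -, hA⟩
  · exact hF A hA
  · have hsub {W} (hWV : W ⊆ V) (hW : W ⊆ insert d (A.erase c)) : W ⊆ A := fun x hx ↦
      mem_of_mem_erase (mem_of_mem_insert_of_ne (hW hx) fun h ↦ hd (h ▸ hWV hx))
    exact (hF _ hA).imp (hsub (erase_subset a V)) (hsub (erase_subset b V))

lemma exists_isNearlyTrivial (hF : ¬ IsTrivialHyp n t F) (h : IsTrivialHyp n t (𝓒 {a} {b} F)) :
    ∃ V, #V = t + 1 ∧ a ∈ V ∧ b ∈ V ∧ IsNearlyTrivial V a b F := by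
  obtain ⟨T, hT, hTF⟩ := h
  replace hTF (A) (hA : A ∈ F) : T ⊆ A ∨ b ∈ A ∧ a ∉ A ∧ T ⊆ insert a (A.erase b) := by
    have := hTF _ (compress_mem_compression hA)
    rcases compress_singleton_eq_or a b A with h | ⟨hb, ha, h⟩ <;> rw [h] at this
    · exact Or.inl this
    · exact Or.inr ⟨hb, ha, this⟩
  obtain ⟨A, hA, hTA⟩ : ∃ A ∈ F, ¬ T ⊆ A := by
    by_contra! h
    exact hF ⟨T, hT, h⟩
  obtain ⟨hbA, haA, hA⟩ := (hTF A hA).resolve_left hTA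
  have hbT : b ∉ T := fun h ↦ by
    have := hA h
    grind
  have haT : a ∈ T := by
    by_contra h
    refine hTA fun x hx ↦ mem_of_mem_erase (mem_of_mem_insert_of_ne (hA hx) fun hxa ↦ h (hxa ▸ hx))
  refine ⟨insert b T, by rw [card_insert_of_notMem hbT, hT], mem_insert_of_mem haT,
    mem_insert_self .., fun A hA ↦ (hTF A hA).symm.imp (fun ⟨_, _, h⟩ x hx ↦ ?_) fun h ↦ ?_⟩
  · rwa [erase_insert hbT]
  · have := @h x
    simp only [mem_erase, mem_insert] at hx this
    grind

lemma IsNontrivialHyp.insert_of_forall_le_card_inter (hF : IsNontrivialHyp n k t F) (htk : t ≤ k)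
    (hA : #A = k) (h : ∀ B ∈ F, t ≤ #(A ∩ B)) : IsNontrivialHyp n k t (insert A F) := by
  refine ⟨(forall_mem_insert _ _ _).2 ⟨hA, hF.1⟩, fun B hB C hC ↦ ?_,
    mt (IsTrivialHyp.anti (subset_insert A F)) hF.2.2⟩
  rcases mem_insert.1 hB with rfl | hB' <;> rcases mem_insert.1 hC with rfl | hC'
  · rwa [inter_self, hA]
  · exact h C hC'
  · exact inter_comm C B ▸ h B hB'
  · exact hF.2.1 B hB' C hC'

lemma IsNontrivialHyp.mem_of_forall_le_card_inter (hF : IsNontrivialHyp n k t F)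
    (hmax : ∀ G, IsNontrivialHyp n k t G → F ⊆ G → #G ≤ #F) (htk : t ≤ k) (hA : #A = k)
    (h : ∀ B ∈ F, t ≤ #(A ∩ B)) : A ∈ F := by
  by_contra hAF
  have := hmax _ (hF.insert_of_forall_le_card_inter htk hA h) (subset_insert A F)
  rw [card_insert_of_notMem hAF] at this
  omega

lemma IsNearlyTrivial.generates (hVF : IsNearlyTrivial V a b F) (hF : IsNontrivialHyp n k t F)
    (hmax : ∀ G, IsNontrivialHyp n k t G → #G ≤ #F) (hV : #V = t + 1) (htk : t < k) (ha : a ∈ V)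
    (hb : b ∈ V) : Generates k F V := by
  refine ⟨hV.trans_le htk, fun A hA hVA ↦ hF.mem_of_forall_le_card_inter (fun G hG _ ↦ hmax G hG)
    htk.le hA ?_⟩
  have hle {B c} (hc : c ∈ V) (h : V.erase c ⊆ B) : t ≤ #(A ∩ B) := by
    have := card_le_card (subset_inter ((erase_subset c V).trans hVA) h)
    rwa [card_erase_of_mem hc, hV] at this
  exact fun B hB ↦ (hVF B hB).elim (hle ha) (hle hb)

lemma Generates.isNontrivialHyp_compression (hV : Generates k F V) (hkn : k < n) (hc : c ∉ V)
    (hd : d ∉ V) (hF : IsNontrivialHyp n k t F) : IsNontrivialHyp n k t (𝓒 {c} {d} F) := by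
  refine ⟨isKUniform_compression hF.1, isTIntersectingHyp_compression hF.2.1, ?_⟩
  rintro ⟨T, hT, hTF⟩
  have hTV : T ⊆ V := subset_of_forall_subset_of_superset hV.1 (by simpa using hkn)
    fun A hA hVA ↦ hTF A (mem_compression_singleton.2 (Or.inl ⟨hV.2 A hA hVA, fun hdA hcA ↦
      hV.2 _ ((card_insert_erase hdA hcA).trans hA)
        ((subset_erase.2 ⟨hVA, hd⟩).trans (subset_insert ..))⟩))
  refine hF.2.2 ⟨T, hT, fun A hA x hx ↦ ?_⟩
  rw [← mem_compress_singleton_iff (ne_of_mem_of_not_mem (hTV hx) hc)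
    (ne_of_mem_of_not_mem (hTV hx) hd)]
  exact hTF _ (compress_mem_compression hA) hx

lemma erase_initSeg_mem_of_isCompressed (hF : IsKUniform n k F) (hkn : k < n) (hmk : m ≤ k + 1)
    (hcomp : ∀ c d : Fin n, m ≤ c → c < d → IsCompressed {c} {d} F) (ha : a.val < m)
    (h : ∃ A ∈ F, a ∉ A ∧ (initSeg n m).erase a ⊆ A) : (initSeg n (k + 1)).erase a ∈ F := by
  obtain ⟨A₀, hA₀, h₀⟩ := h
  obtain ⟨A, hA, hmin⟩ := exists_min_image {A ∈ F | a ∉ A ∧ (initSeg n m).erase a ⊆ A}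
    (∑ x ∈ ·, x.val) ⟨A₀, mem_filter.2 ⟨hA₀, h₀⟩⟩
  obtain ⟨hAF, haA, hmA⟩ := mem_filter.1 hA
  have hcard : #((initSeg n (k + 1)).erase a) = k := by
    rw [card_erase_of_mem (mem_initSeg.2 (by omega)), card_initSeg hkn, Nat.succ_sub_one]
  by_contra hmem
  have hne : A ≠ (initSeg n (k + 1)).erase a := fun h ↦ hmem (h ▸ hAF)
  obtain ⟨d, hdA, hd⟩ := not_subset.1 fun h ↦
    hne (eq_of_subset_of_card_le h (by rw [hcard, hF A hAF]))
  obtain ⟨c, hc, hcA⟩ := not_subset.1 fun h ↦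
    hne (eq_of_subset_of_card_le h (by rw [hcard, hF A hAF])).symm
  obtain ⟨hca, hck⟩ := mem_erase.1 hc
  have hdk : ¬ d.val < k + 1 := fun h ↦
    hd (mem_erase.2 ⟨fun hda ↦ haA (hda ▸ hdA), mem_initSeg.2 h⟩)
  have hcm : ¬ c.val < m := fun h ↦ hcA (hmA (mem_erase.2 ⟨hca, mem_initSeg.2 h⟩))
  have hcd : c < d := Fin.lt_def.2 ((mem_initSeg.1 hck).trans_le (not_lt.1 hdk))
  refine (hmin _ (mem_filter.2 ⟨insert_erase_mem_of_isCompressed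
    (hcomp c d (not_lt.1 hcm) hcd) hAF hdA hcA, ?_, ?_⟩)).not_gt
    (sum_val_insert_erase_lt hcd hdA hcA)
  · rw [mem_insert, not_or]
    exact ⟨hca.symm, mt mem_of_mem_erase haA⟩
  · refine (subset_erase.2 ⟨hmA, fun h ↦ ?_⟩).trans (subset_insert ..)
    have := mem_initSeg.1 (mem_of_mem_erase h)
    omega

lemma lt_card_filter_subset_of_generates (hF : Generates k F (initSeg n (t + 1))) (htk : t < k)
    (hkn : k < n) (hab : a ≠ b) (ha : a.val < t + 1) (hb : b.val < t + 1)
    (haF : (initSeg n (k + 1)).erase a ∈ F) (hbF : (initSeg n (k + 1)).erase b ∈ F) :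
    k + 1 - t < #{A ∈ F | A ⊆ initSeg n (k + 1)} := by
  set X := insert a (insert b (initSeg n (k + 1) \ initSeg n (t + 1)))
  have hXsub : X ⊆ initSeg n (k + 1) := by
    refine insert_subset ?_ (insert_subset ?_ sdiff_subset) <;> rw [mem_initSeg] <;> omega
  have hXF : X.image (initSeg n (k + 1)).erase ⊆ {A ∈ F | A ⊆ initSeg n (k + 1)} := by
    refine image_subset_iff.2 fun x hx ↦ mem_filter.2 ⟨?_, erase_subset ..⟩
    rcases mem_insert.1 hx with rfl | hx'
    · exact haF
    rcases mem_insert.1 hx' with rfl | hx'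
    · exact hbF
    · refine hF.2 _ ?_ (subset_erase.2 ⟨fun y hy ↦ ?_, (mem_sdiff.1 hx').2⟩)
      · rw [card_erase_of_mem (hXsub hx), card_initSeg hkn, Nat.succ_sub_one]
      · rw [mem_initSeg] at hy ⊢
        omega
  have hX : #X = k + 2 - t := by
    rw [card_insert_of_notMem, card_insert_of_notMem, card_sdiff_of_subset,
      card_initSeg hkn, card_initSeg (htk.trans hkn)]
    · omega
    · intro x hx
      rw [mem_initSeg] at hx ⊢
      omega
    · simp [hb]
    · simp [hab, ha]
  have := card_le_card hXF
  rw [card_image_of_injOn ((erase_injOn _).mono hXsub)] at this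
  omega

lemma IsNearlyTrivial.exists_isShifted (hVF : IsNearlyTrivial (initSeg n (t + 1)) a b F)
    (htk : t < k) (hkn : k < n) (hab : a ≠ b) (ha : a.val < t + 1) (hb : b.val < t + 1)
    (hF : IsNontrivialHyp n k t F) (hmax : ∀ G, IsNontrivialHyp n k t G → #G ≤ #F) :
    ∃ G, IsNontrivialHyp n k t G ∧ IsShifted G ∧ #G = #F := by
  obtain ⟨G, ⟨hG, hGF, hVG⟩, hcomp⟩ := exists_isCompressed_of_compression
    (P := fun G ↦ IsNontrivialHyp n k t G ∧ #G = #F ∧ IsNearlyTrivial (initSeg n (t + 1)) a b G)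
    ⟨hF, rfl, hVF⟩
  have hV : #(initSeg n (t + 1)) = t + 1 := card_initSeg (htk.trans hkn)
  have hgen : Generates k G (initSeg n (t + 1)) :=
    hVG.generates hG (hGF ▸ hmax) hV htk (mem_initSeg.2 ha) (mem_initSeg.2 hb)
  have hcomp' (c d : Fin n) (hc : t + 1 ≤ c) (hcd : c < d) : IsCompressed {c} {d} G := by
    have hd := hc.trans (Fin.le_def.1 hcd.le)
    exact hcomp c d hcd ⟨hgen.isNontrivialHyp_compression hkn (by simpa using hc)
      (by simpa using hd) hG, by rw [card_compression, hGF], hVG.compression (by simpa using hd)⟩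
  have hmem {a b : Fin n} (hab : a ≠ b) (ha : a.val < t + 1) (hb : b.val < t + 1)
      (hVG : IsNearlyTrivial (initSeg n (t + 1)) a b G) : (initSeg n (k + 1)).erase a ∈ G := by
    refine erase_initSeg_mem_of_isCompressed hG.1 hkn (by omega) hcomp' ha ?_
    by_contra! h
    refine hG.2.2 (hVG.isTrivialHyp hV (mem_initSeg.2 hb) fun A hA ↦ ?_)
    by_contra haA
    exact (hVG A hA).elim (h A hA haA) fun h ↦ haA (h (by simp [hab, ha]))
  obtain ⟨G', hG', hS, hcard⟩ := exists_isShifted_of_lt_card_filter_subset hkn htk.le hG.1 hG.2.1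
    (lt_card_filter_subset_of_generates hgen htk hkn hab ha hb (hmem hab ha hb hVG)
      (hmem hab.symm hb ha hVG.symm))
  exact ⟨G', hG', hS, hcard.trans hGF⟩

lemma IsNontrivialHyp.smul (hF : IsNontrivialHyp n k t F) (σ : Equiv.Perm (Fin n)) :
    IsNontrivialHyp n k t (σ • F) := by
  refine ⟨fun A hA ↦ ?_, fun A hA B hB ↦ ?_, fun ⟨T, hT, hTF⟩ ↦ hF.2.2 ⟨σ⁻¹ • T, ?_, ?_⟩⟩
  · obtain ⟨A, hA', rfl⟩ := mem_smul_finset.1 hA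
    rw [card_smul_finset, hF.1 A hA']
  · obtain ⟨A, hA', rfl⟩ := mem_smul_finset.1 hA
    obtain ⟨B, hB', rfl⟩ := mem_smul_finset.1 hB
    rw [← smul_finset_inter, card_smul_finset]
    exact hF.2.1 A hA' B hB'
  · rw [card_smul_finset, hT]
  · intro A hA
    rw [← subset_smul_finset_iff]
    exact hTF _ (smul_mem_smul_finset hA)

lemma IsNearlyTrivial.smul (hF : IsNearlyTrivial V a b F) (σ : Equiv.Perm (Fin n)) :
    IsNearlyTrivial (σ • V) (σ a) (σ b) (σ • F) := by
  have herase (c) : (σ • V).erase (σ c) = σ • V.erase c := by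
    rw [← sdiff_singleton_eq_erase, ← sdiff_singleton_eq_erase, smul_finset_sdiff,
      smul_finset_singleton, Equiv.Perm.smul_def]
  intro A hA
  obtain ⟨A, hA', rfl⟩ := mem_smul_finset.1 hA
  rw [herase, herase, smul_finset_subset_smul_finset_iff, smul_finset_subset_smul_finset_iff]
  exact hF A hA'

lemma IsNontrivialHyp.exists_isShifted (htk : t < k) (hkn : k < n)
    (hF : IsNontrivialHyp n k t F) (hmax : ∀ G, IsNontrivialHyp n k t G → #G ≤ #F) :
    ∃ G, IsNontrivialHyp n k t G ∧ IsShifted G ∧ #G = #F := by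
  obtain ⟨G, ⟨hG, hGF⟩, hcomp⟩ := exists_isCompressed_of_compression
    (P := fun G ↦ IsNontrivialHyp n k t G ∧ #G = #F) ⟨hF, rfl⟩
  by_cases hall : ∀ a b, a < b → ¬ IsTrivialHyp n t (𝓒 {a} {b} G)
  · exact ⟨G, hG, isShifted_of_isCompressed fun a b hab ↦ hcomp a b hab ⟨⟨isKUniform_compression
      hG.1, isTIntersectingHyp_compression hG.2.1, hall a b hab⟩, by rw [card_compression, hGF]⟩,
      hGF⟩
  push Not at hall
  obtain ⟨a, b, hab, htriv⟩ := hall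
  obtain ⟨V, hV, ha, hb, hVG⟩ := exists_isNearlyTrivial hG.2.2 htriv
  obtain ⟨σ, hσ⟩ : ∃ σ : Equiv.Perm (Fin n), σ • V = initSeg n (t + 1) := by
    have := Set.powersetCard.isPretransitive (α := Fin n) (n := t + 1)
    obtain ⟨σ, hσ⟩ := MulAction.exists_smul_eq (Equiv.Perm (Fin n))
      (⟨V, hV⟩ : Set.powersetCard (Fin n) (t + 1))
      ⟨initSeg n (t + 1), card_initSeg (htk.trans hkn)⟩
    exact ⟨σ, congrArg Subtype.val hσ⟩
  have hlt {x} (hx : x ∈ V) : (σ x).val < t + 1 := by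
    rw [← mem_initSeg, ← hσ]
    exact smul_mem_smul_finset hx
  have hσG : #(σ • G) = #F := (card_smul_finset σ G).trans hGF
  exact hσG ▸ (hσ ▸ hVG.smul σ).exists_isShifted htk hkn (σ.injective.ne hab.ne) (hlt ha) (hlt hb)
    (hG.smul σ) (hσG ▸ hmax)

lemma IsNontrivialHyp.exists_isExtremal (htk : t < k) (hkn : k < n)
    (hF : IsNontrivialHyp n k t F) : ∃ G, IsExtremal n k t G := by
  classical
  obtain ⟨M, hM, hmax⟩ := exists_max_image {G | IsNontrivialHyp n k t G} card
    ⟨F, by simpa using hF⟩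
  simp only [mem_filter, mem_univ, true_and] at hM hmax
  obtain ⟨G, hG, hS, hGM⟩ := hM.exists_isShifted htk hkn hmax
  exact ⟨G, hG, hS, hGM ▸ hmax⟩

end Shifting

/-! ### Counting non-trivial families -/

section Bound

variable {n s t : ℕ} {F : Finset (Finset (Fin n))}

lemma IsNontrivialHyp.exists_card_add_choose_le (ht : 1 ≤ t) (hs : 1 ≤ s)
    (hn : (t + 1) * (s + 1) + 1 ≤ n) (hF : IsNontrivialHyp n (t + s) t F) :
    ∃ m, t + 2 ≤ m ∧ m ≤ t + s + 1 ∧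
      #F + (n - m).choose s ≤ (n - t).choose s + t * (n - m).choose (t + s + 1 - m) := by
  obtain ⟨G, hG⟩ := hF.exists_isExtremal (by omega) (by nlinarith)
  obtain ⟨m, hm, hms, h⟩ := hG.exists_card_add_choose_le ht hn
  exact ⟨m, hm, hms, (Nat.add_le_add_right (hG.card_le F hF) _).trans h⟩

end Bound

section Enumeration

lemma card_filter_card_le_le_pow {α : Type*} (S : Finset α) (b : ℕ) :
    #{G ∈ S.powerset | #G ≤ b} ≤ (#S + 1) ^ b := by
  calc #{G ∈ S.powerset | #G ≤ b}
      = ∑ i ∈ range (b + 1), #{G ∈ {G ∈ S.powerset | #G ≤ b} | #G = i} :=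
        card_eq_sum_card_fiberwise fun G hG ↦ by
          rw [mem_coe, mem_filter] at hG
          exact mem_coe.2 (mem_range.2 (Nat.lt_succ_of_le hG.2))
    _ ≤ ∑ i ∈ range (b + 1), (#S) ^ i * 1 ^ (b - i) * b.choose i := by
        refine sum_le_sum fun i hi ↦ ?_
        have hsub : {G ∈ {G ∈ S.powerset | #G ≤ b} | #G = i} ⊆ powersetCard i S := fun G hG ↦ by
          simp only [mem_filter, mem_powerset] at hG
          exact mem_powersetCard.2 ⟨hG.1.1, hG.2⟩
        calc _ ≤ (#S).choose i := card_powersetCard i S ▸ card_le_card hsub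
          _ ≤ (#S) ^ i := Nat.choose_le_pow _ _
          _ ≤ (#S) ^ i * 1 ^ (b - i) * b.choose i := by
              rw [one_pow, mul_one]
              exact Nat.le_mul_of_pos_right _ (Nat.choose_pos (by grind))
    _ = (#S + 1) ^ b := (add_pow _ _ _).symm

variable {α : Type*} [Fintype α] [DecidableEq α] {k s t : ℕ} {A : Finset α}
  {F G : Finset (Finset α)}

/-- The `k`-sets that share at least `t` elements with every member of `G`. -/
def compatibleEdges (k t : ℕ) (G : Finset (Finset α)) : Finset (Finset α) :=
  {A ∈ powersetCard k univ | ∀ B ∈ G, t ≤ #(A ∩ B)}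

lemma mem_compatibleEdges :
    A ∈ compatibleEdges k t G ↔ #A = k ∧ ∀ B ∈ G, t ≤ #(A ∩ B) := by
  simp [compatibleEdges, mem_powersetCard]

lemma compatibleEdges_anti (h : G ⊆ F) : compatibleEdges k t F ⊆ compatibleEdges k t G :=
  fun A hA ↦ by
    rw [mem_compatibleEdges] at hA ⊢
    exact hA.imp_right fun hA B hB ↦ hA B (h hB)

lemma card_compatibleEdges_singleton_le (hA : #A = t + s) :
    #(compatibleEdges (t + s) t {A}) ≤ (Fintype.card α + 1) ^ (2 * s) := by
  rw [← card_univ]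
  refine le_trans ?_ (card_filter_card_le_le_pow univ (2 * s))
  refine card_le_card_of_injOn (symmDiff A) (fun B hB ↦ ?_) (symmDiff_right_injective A).injOn
  rw [mem_coe, mem_compatibleEdges] at hB
  have hBA := hB.2 A (mem_singleton_self A)
  have h₁ := card_sdiff_add_card_inter B A
  have h₂ := card_sdiff_add_card_inter A B
  have h₃ := card_union_le (A \ B) (B \ A)
  rw [inter_comm A B] at h₂
  simp only [symmDiff, sup_eq_union, coe_filter, mem_powerset, subset_univ, true_and,
    Set.mem_ofPred_eq]
  omega

lemma exists_subset_compatibleEdges_eq (hF : ∀ B ∈ F, #B = t + s) :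
    ∃ G ⊆ F, compatibleEdges (t + s) t G = compatibleEdges (t + s) t F ∧
      #G ≤ (2 * s + 2).choose (s + 1) := by
  obtain ⟨G, hG, hmin⟩ := exists_min_image
    {G ∈ F.powerset | compatibleEdges (t + s) t G = compatibleEdges (t + s) t F} card
    ⟨F, by simp⟩
  simp only [mem_filter, mem_powerset, and_imp] at hG hmin
  obtain ⟨hGF, hGI⟩ := hG
  have hex (B : G) : ∃ A ∈ compatibleEdges (t + s) t (G.erase B), #(A ∩ B) < t := by
    by_contra! h
    have := hmin (G.erase B) ((erase_subset ..).trans hGF) <|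
      ((compatibleEdges_anti (erase_subset ..)).antisymm' fun A hA ↦ by
        refine mem_compatibleEdges.2 ⟨(mem_compatibleEdges.1 hA).1, fun C hC ↦ ?_⟩
        by_cases hCB : C = B
        · exact hCB ▸ h A hA
        · exact (mem_compatibleEdges.1 hA).2 C (mem_erase.2 ⟨hCB, hC⟩)).trans hGI
    exact (card_erase_lt_of_mem B.2).not_ge this
  choose A hA hAB using hex
  refine ⟨G, hGF, hGI, ?_⟩
  rw [← Fintype.card_coe]
  refine card_le_choose_of_card_inter_lt_iff A (fun B : G ↦ B.1)
    (fun B ↦ (mem_compatibleEdges.1 (hA B)).1) (fun B ↦ hF B (hGF B.2)) fun B C ↦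
    ⟨fun h ↦ ?_, fun h ↦ h ▸ hAB B⟩
  by_contra hBC
  exact h.not_ge ((mem_compatibleEdges.1 (hA B)).2 C
    (mem_erase.2 ⟨fun h ↦ hBC (Subtype.ext h.symm), C.2⟩))

variable {n : ℕ} {H : Finset (Finset (Fin n))}

lemma IsNontrivialHyp.exists_subset_compatibleEdges_eq_self (htk : t ≤ k)
    (hH : IsNontrivialHyp n k t H) :
    ∃ F, H ⊆ F ∧ IsNontrivialHyp n k t F ∧ compatibleEdges k t F = F := by
  classical
  obtain ⟨F, hF, hmax⟩ := exists_max_image {F | IsNontrivialHyp n k t F ∧ H ⊆ F} card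
    ⟨H, by simpa using hH⟩
  simp only [mem_filter, mem_univ, true_and, and_imp] at hF hmax
  refine ⟨F, hF.2, hF.1, subset_antisymm (fun A hA ↦ ?_) fun A hA ↦
    mem_compatibleEdges.2 ⟨hF.1.1 A hA, hF.1.2.1 A hA⟩⟩
  obtain ⟨hA, hAF⟩ := mem_compatibleEdges.1 hA
  exact hF.1.mem_of_forall_le_card_inter (fun G hG hFG ↦ hmax G hG (hF.2.trans hFG)) htk hA hAF

lemma not_isTIntersectingHyp_compatibleEdges_empty (ht : 1 ≤ t) (hkn : k ≤ n)
    (hn : 2 * k < n + t) : ¬ IsTIntersectingHyp n t (compatibleEdges k t ∅) := by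
  intro hI
  obtain ⟨B, -, hB⟩ := exists_superset_card_eq (s := (∅ : Finset (Fin n))) (Nat.zero_le k)
    (by simpa using hkn)
  obtain ⟨A, -, hA, hAB⟩ := exists_superset_card_eq_card_inter_lt (X := ∅) (Y := B) (t := t)
    (Nat.zero_le k) (by simpa using hkn) (by simpa [← Nat.succ_le_iff] using ht)
    (by rw [hB, Fintype.card_fin]; omega)
  refine hAB.not_ge (hI A ?_ B ?_) <;> simp [mem_compatibleEdges, hA, hB]

lemma IsNontrivialHyp.exists_subset_compatibleEdges_insert (ht : 1 ≤ t) (hn : t + 2 * s < n)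
    (hH : IsNontrivialHyp n (t + s) t H) :
    ∃ A G, #A = t + s ∧ G ⊆ (compatibleEdges (t + s) t {A}).erase A ∧
      #G ≤ (2 * s + 2).choose (s + 1) ∧
      IsNontrivialHyp n (t + s) t (compatibleEdges (t + s) t (insert A G)) ∧
      H ⊆ compatibleEdges (t + s) t (insert A G) := by
  obtain ⟨F, hHF, hF, hFI⟩ := hH.exists_subset_compatibleEdges_eq_self (Nat.le_add_right t s)
  obtain ⟨G, hGF, hGI, hG⟩ := exists_subset_compatibleEdges_eq hF.1
  rw [hFI] at hGI
  obtain ⟨A, hA⟩ : G.Nonempty := nonempty_iff_ne_empty.2 fun h ↦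
    not_isTIntersectingHyp_compatibleEdges_empty ht (by omega) (by omega) (h ▸ hGI ▸ hF.2.1)
  refine ⟨A, G.erase A, hF.1 A (hGF hA), erase_subset_erase A fun B hB ↦ ?_,
    (card_erase_le).trans hG, by rwa [insert_erase hA, hGI], by rwa [insert_erase hA, hGI]⟩
  exact mem_compatibleEdges.2 ⟨hF.1 B (hGF hB), by simpa using hF.2.1 B (hGF hB) A (hGF hA)⟩

lemma choose_add_le_choose_mul_pow (n t s : ℕ) :
    n.choose (t + s) ≤ n.choose t * (n + 1) ^ s := by
  calc n.choose (t + s) ≤ n.choose (t + s) * (t + s).choose t :=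
        Nat.le_mul_of_pos_right _ (Nat.choose_pos (Nat.le_add_right t s))
    _ = n.choose t * (n - t).choose s := by
        rw [Nat.choose_mul (Nat.le_add_right t s), Nat.add_sub_cancel_left]
    _ ≤ n.choose t * (n + 1) ^ s := Nat.mul_le_mul_left _
        ((Nat.choose_le_pow _ _).trans (Nat.pow_le_pow_left (by omega) _))

lemma card_isNontrivialHyp_le_mul_two_pow {M : ℕ} (ht : 1 ≤ t) (hn : t + 2 * s < n)
    (hM : ∀ F, IsNontrivialHyp n (t + s) t F → #F ≤ M) :
    Nat.card {H // IsNontrivialHyp n (t + s) t H} ≤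
      n.choose t * (n + 1) ^ (s + 2 * s * (2 * s + 2).choose (s + 1)) * 2 ^ M := by
  classical
  set b := (2 * s + 2).choose (s + 1)
  let Q (A : Finset (Fin n)) : Finset (Finset (Finset (Fin n))) :=
    {G ∈ {G ∈ ((compatibleEdges (t + s) t {A}).erase A).powerset | #G ≤ b} |
      IsNontrivialHyp n (t + s) t (compatibleEdges (t + s) t (insert A G))}
  have hQ (A) (hA : A ∈ powersetCard (t + s) univ) : #(Q A) ≤ ((n + 1) ^ (2 * s)) ^ b := by
    refine (card_filter_le _ _).trans ((card_filter_card_le_le_pow _ b).trans ?_)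
    have hA := (mem_powersetCard.1 hA).2
    rw [card_erase_add_one (mem_compatibleEdges.2 ⟨hA, by simp [hA]⟩)]
    exact Nat.pow_le_pow_left (by simpa using card_compatibleEdges_singleton_le hA) b
  have hcover : ({H | IsNontrivialHyp n (t + s) t H} : Finset _) ⊆
      (powersetCard (t + s) univ).biUnion fun A ↦
        (Q A).biUnion fun G ↦ (compatibleEdges (t + s) t (insert A G)).powerset := by
    intro H hH
    obtain ⟨A, G, hA, hGA, hG, hNT, hHG⟩ :=
      (mem_filter.1 hH).2.exists_subset_compatibleEdges_insert ht hn
    simp only [mem_biUnion, mem_powerset]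
    exact ⟨A, mem_powersetCard.2 ⟨subset_univ A, hA⟩, G,
      mem_filter.2 ⟨mem_filter.2 ⟨mem_powerset.2 hGA, hG⟩, hNT⟩, hHG⟩
  rw [Nat.subtype_card {H | IsNontrivialHyp n (t + s) t H} (by simp)]
  calc _ ≤ _ := card_le_card hcover
    _ ≤ #(powersetCard (t + s) (univ : Finset (Fin n))) * (((n + 1) ^ (2 * s)) ^ b * 2 ^ M) := by
        refine card_biUnion_le_card_mul _ _ _ fun A hA ↦ ?_
        refine (card_biUnion_le_card_mul _ _ (2 ^ M) fun G hG ↦ ?_).trans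
          (Nat.mul_le_mul_right _ (hQ A hA))
        rw [card_powerset]
        exact Nat.pow_le_pow_right two_pos (hM _ (mem_filter.1 hG).2)
    _ ≤ n.choose t * (n + 1) ^ s * (((n + 1) ^ (2 * s)) ^ b * 2 ^ M) := by
        rw [card_powersetCard, card_univ, Fintype.card_fin]
        exact Nat.mul_le_mul_right _ (choose_add_le_choose_mul_pow n t s)
    _ = _ := by ring

end Enumeration

/-! ### Binomial estimates -/

section Estimates

open Filter

lemma eventually_mul_clog_le (K : ℕ) : ∀ᶠ n in atTop, K * Nat.clog 2 (n + 1) ≤ n := by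
  rcases K.eq_zero_or_pos with rfl | hK
  · simp
  filter_upwards [eventually_ge_atTop (K * (4 * K))] with n hn
  obtain ⟨q, hq⟩ : ∃ q, n / K = q := ⟨_, rfl⟩
  have hqK : 4 * K ≤ q := by
    rw [← hq, Nat.le_div_iff_mul_le hK]
    linarith
  have hclog : Nat.clog 2 (n + 1) ≤ q := by
    refine Nat.clog_le_of_le_pow ?_
    have hchoose : (q + 1).choose 2 * 2 = (q + 1) * q := by
      rw [Nat.choose_succ_right_eq, Nat.choose_one_right, Nat.add_sub_cancel]
    have htwo := Nat.choose_le_two_pow (q + 1) 2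
    have hnq : n < K * (q + 1) := hq ▸ Nat.lt_mul_div_succ n hK
    rw [pow_succ] at htwo
    nlinarith
  exact (Nat.mul_le_mul_left K hclog).trans (hq ▸ Nat.mul_div_le n K)

lemma pow_mul_choose_le_choose_mul (r s u : ℕ) : r ^ u * s.choose u ≤ (r * s).choose u := by
  rcases r.eq_zero_or_pos with rfl | hr
  · cases u <;> simp
  induction u with
  | zero => simp
  | succ u ih =>
    refine Nat.le_of_mul_le_mul_right (c := u + 1) ?_ u.succ_pos
    calc r ^ (u + 1) * s.choose (u + 1) * (u + 1)
        = r ^ u * r * (s.choose (u + 1) * (u + 1)) := by ring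
      _ = r ^ u * s.choose u * (r * s - r * u) := by
          rw [Nat.choose_succ_right_eq, ← Nat.mul_sub]
          ring
      _ ≤ (r * s).choose u * (r * s - u) := by
          have := Nat.le_mul_of_pos_left u hr
          exact Nat.mul_le_mul ih (by omega)
      _ = (r * s).choose (u + 1) * (u + 1) := (Nat.choose_succ_right_eq _ _).symm

lemma choose_succ_mul_le_choose_succ_mul {p q : ℕ} (h : q ≤ p) (r : ℕ) :
    q.choose (r + 1) * p ≤ p.choose (r + 1) * q := by
  rcases q with - | q
  · simp
  obtain ⟨p, rfl⟩ := Nat.exists_eq_add_of_le' h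
  refine Nat.le_of_mul_le_mul_right (c := r + 1) ?_ r.succ_pos
  calc (q + 1).choose (r + 1) * (p + (q + 1)) * (r + 1)
      = (q + 1) * q.choose r * (p + q + 1) := by
        rw [Nat.add_one_mul_choose_eq]
        ring
    _ ≤ (q + 1) * (p + q).choose r * (p + q + 1) := by
        gcongr
        omega
    _ = (p + q + 1) * (p + q).choose r * (q + 1) := by ring
    _ = (p + (q + 1)).choose (r + 1) * (q + 1) * (r + 1) := by
        rw [Nat.add_one_mul_choose_eq]
        ring_nf

/-- The binomial coefficient `p.choose r` grows at least linearly in `p`, which turns a bound at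
a fixed `q` into one with an arbitrarily large factor `l`. -/
lemma mul_le_choose_of_mul_le_mul_choose {p q r K X l : ℕ} (hr : r ≠ 0) (hq : 1 ≤ q) (hqp : q ≤ p)
    (hl : K * l ≤ p) (hX : X * q ≤ K * q.choose r) : X * l ≤ p.choose r := by
  obtain ⟨r, rfl⟩ := Nat.exists_eq_succ_of_ne_zero hr
  refine Nat.le_of_mul_le_mul_right (c := q) ?_ hq
  calc X * l * q = X * q * l := by ring
    _ ≤ K * q.choose (r + 1) * l := Nat.mul_le_mul_right _ hX
    _ = q.choose (r + 1) * (K * l) := by ring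
    _ ≤ q.choose (r + 1) * p := Nat.mul_le_mul_left _ hl
    _ ≤ p.choose (r + 1) * q := choose_succ_mul_le_choose_succ_mul hqp r

lemma three_pow_mul_choose_le {s d : ℕ} (hd : d ≤ s) :
    3 ^ d * (2 * s).choose s ≤ 2 ^ d * (2 * s + d).choose s := by
  induction d with
  | zero => simp
  | succ d ih =>
    have h := Nat.choose_mul_succ_eq (2 * s + d) s
    rw [show 2 * s + d + 1 - s = s + d + 1 by omega] at h
    refine Nat.le_of_mul_le_mul_right (c := s + d + 1) ?_ (Nat.succ_pos _)
    calc 3 ^ (d + 1) * (2 * s).choose s * (s + d + 1)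
        = 3 ^ d * (2 * s).choose s * (3 * (s + d + 1)) := by ring
      _ ≤ 2 ^ d * (2 * s + d).choose s * (2 * (2 * s + d + 1)) :=
          Nat.mul_le_mul (ih (by omega)) (by omega)
      _ = 2 ^ (d + 1) * ((2 * s + d).choose s * (2 * s + d + 1)) := by ring
      _ = 2 ^ (d + 1) * (2 * s + (d + 1)).choose s * (s + d + 1) := by
          rw [h]
          ring_nf

lemma three_pow_mul_four_pow_le {s d : ℕ} (hs : 1 ≤ s) (hd : d ≤ s) :
    3 ^ d * 4 ^ s ≤ 2 ^ d * (2 * s * (2 * s + d).choose s) := by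
  calc 3 ^ d * 4 ^ s ≤ 3 ^ d * (2 * s * (2 * s).choose s) :=
        Nat.mul_le_mul_left _ (Nat.centralBinom_eq_two_mul_choose s ▸
          Nat.four_pow_le_two_mul_self_mul_centralBinom s hs)
    _ = 2 * s * (3 ^ d * (2 * s).choose s) := by ring
    _ ≤ 2 * s * (2 ^ d * (2 * s + d).choose s) :=
        Nat.mul_le_mul_left _ (three_pow_mul_choose_le hd)
    _ = 2 ^ d * (2 * s * (2 * s + d).choose s) := by ring

lemma exists_pow_mul_two_pow_le_mul_three_pow (j : ℕ) : ∃ K, ∀ s, s ^ j * 2 ^ s ≤ K * 3 ^ s := by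
  obtain ⟨C, hC⟩ := (tendsto_pow_const_div_const_pow_of_one_lt j
    (by norm_num : (1 : ℝ) < 3 / 2)).bddAbove_range
  refine ⟨⌈C⌉₊, fun s ↦ ?_⟩
  have h : (s : ℝ) ^ j / (3 / 2) ^ s ≤ ⌈C⌉₊ := (hC ⟨s, rfl⟩).trans (Nat.le_ceil C)
  rw [div_le_iff₀ (by positivity), div_pow, ← mul_div_assoc, le_div_iff₀ (by positivity)] at h
  exact_mod_cast h

lemma exists_pow_mul_four_pow_le_mul_choose (j : ℕ) :
    ∃ K, ∀ s, 1 ≤ s → s ^ j * 4 ^ s ≤ K * (3 * s).choose s := by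
  obtain ⟨K, hK⟩ := exists_pow_mul_two_pow_le_mul_three_pow (j + 1)
  refine ⟨2 * K, fun s hs ↦ Nat.le_of_mul_le_mul_right (c := 3 ^ s) ?_ (by positivity)⟩
  calc s ^ j * 4 ^ s * 3 ^ s = s ^ j * (3 ^ s * 4 ^ s) := by ring
    _ ≤ s ^ j * (2 ^ s * (2 * s * (2 * s + s).choose s)) :=
        Nat.mul_le_mul_left _ (three_pow_mul_four_pow_le hs le_rfl)
    _ = 2 * (s ^ (j + 1) * 2 ^ s) * (3 * s).choose s := by
        rw [show 2 * s + s = 3 * s by ring]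
        ring
    _ ≤ 2 * (K * 3 ^ s) * (3 * s).choose s :=
        Nat.mul_le_mul_right _ (Nat.mul_le_mul_left 2 (hK s))
    _ = 2 * K * (3 * s).choose s * 3 ^ s := by ring

lemma choose_three_mul_succ_le (r : ℕ) :
    (3 * (r + 1)).choose (r + 1) ≤ 3 * (3 * (r + 1)).choose r := by
  refine Nat.le_of_mul_le_mul_right (c := r + 1) ?_ r.succ_pos
  calc (3 * (r + 1)).choose (r + 1) * (r + 1) = (3 * (r + 1)).choose r * (3 * (r + 1) - r) :=
        Nat.choose_succ_right_eq _ _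
    _ ≤ (3 * (r + 1)).choose r * (3 * (r + 1)) := Nat.mul_le_mul_left _ (Nat.sub_le _ _)
    _ = 3 * (3 * (r + 1)).choose r * (r + 1) := by ring

lemma exists_mul_four_pow_mul_le_choose :
    ∃ K, ∀ r p l, 1 ≤ r → 3 * (r + 1) ≤ p → K * l ≤ p →
      16 * (r + 1) ^ 2 * 4 ^ (r + 1) * l ≤ p.choose r := by
  obtain ⟨K, hK⟩ := exists_pow_mul_four_pow_le_mul_choose 3
  refine ⟨144 * K, fun r p l hr hp hl ↦
    mul_le_choose_of_mul_le_mul_choose (by omega) (by omega) hp hl ?_⟩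
  calc 16 * (r + 1) ^ 2 * 4 ^ (r + 1) * (3 * (r + 1))
      = 48 * ((r + 1) ^ 3 * 4 ^ (r + 1)) := by ring
    _ ≤ 48 * (K * (3 * (3 * (r + 1)).choose r)) := Nat.mul_le_mul_left 48
        ((hK (r + 1) (by omega)).trans (Nat.mul_le_mul_left K (choose_three_mul_succ_le r)))
    _ = 144 * K * (3 * (r + 1)).choose r := by ring

lemma three_eighths_le_log : (3 / 8 : ℝ) ≤ Real.log (3 / 2) := by
  have h : 3 ≤ Real.log ((3 / 2) ^ 8) := by
    rw [Real.le_log_iff_exp_le (by positivity)]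
    calc Real.exp 3 = Real.exp 1 ^ 3 := by
          rw [← Real.exp_nat_mul]
          norm_num
      _ ≤ 2.7182818286 ^ 3 := by
          gcongr
          exact Real.exp_one_lt_d9.le
      _ ≤ (3 / 2) ^ 8 := by norm_num
  rw [Real.log_pow] at h
  push_cast at h
  linarith

lemma cube_mul_two_pow_le_three_pow {s d : ℕ} (hd : 8 * Real.log (s + 1) ≤ d) :
    (s + 1) ^ 3 * 2 ^ d ≤ 3 ^ d := by
  have h : ((s : ℝ) + 1) ^ 3 ≤ (3 / 2) ^ d := by
    rw [← Real.log_le_log_iff (by positivity) (by positivity), Real.log_pow, Real.log_pow]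
    have := mul_le_mul_of_nonneg_left three_eighths_le_log d.cast_nonneg
    push_cast
    linarith
  rw [div_pow, le_div_iff₀ (by positivity)] at h
  exact_mod_cast h

lemma sq_mul_four_pow_le_choose {s d : ℕ} (hs : 1 ≤ s) (hd : d ≤ s)
    (hlog : 8 * Real.log (s + 1) ≤ d) : s ^ 2 * 4 ^ s ≤ 2 * (2 * s + d).choose s := by
  refine Nat.le_of_mul_le_mul_right (c := 2 ^ d * s) ?_ (by positivity)
  calc s ^ 2 * 4 ^ s * (2 ^ d * s) = s ^ 3 * 2 ^ d * 4 ^ s := by ring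
    _ ≤ (s + 1) ^ 3 * 2 ^ d * 4 ^ s := by
        gcongr
        omega
    _ ≤ 3 ^ d * 4 ^ s := Nat.mul_le_mul_right _ (cube_mul_two_pow_le_three_pow hlog)
    _ ≤ 2 ^ d * (2 * s * (2 * s + d).choose s) := three_pow_mul_four_pow_le hs hd
    _ = 2 * (2 * s + d).choose s * (2 ^ d * s) := by ring

lemma exists_mul_four_pow_mul_le_choose_of_log_le :
    ∃ K, ∀ s N l : ℕ, 1 ≤ s → (3 * s ≤ N ∨ 2 * (s : ℝ) + 8 * Real.log (s + 1) ≤ N) → K * l ≤ N →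
      32 * s * 4 ^ s * l ≤ N.choose s := by
  obtain ⟨K, hK⟩ := exists_pow_mul_four_pow_le_mul_choose 2
  refine ⟨96 * K + 192, fun s N l hs hN hl ↦ ?_⟩
  rcases le_or_gt (3 * s) N with h3 | h3
  · refine mul_le_choose_of_mul_le_mul_choose (q := 3 * s) (by omega) (by omega) h3 hl ?_
    calc 32 * s * 4 ^ s * (3 * s) = 96 * (s ^ 2 * 4 ^ s) := by ring
      _ ≤ 96 * (K * (3 * s).choose s) := Nat.mul_le_mul_left _ (hK s hs)
      _ ≤ (96 * K + 192) * (3 * s).choose s := by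
          rw [add_mul, mul_assoc]
          exact Nat.le_add_right _ _
  · replace hN := hN.resolve_left h3.not_ge
    have h2 : 2 * s ≤ N := by
      have : 0 ≤ Real.log (s + 1) := Real.log_nonneg (by simp)
      exact_mod_cast (by linarith : 2 * (s : ℝ) ≤ N)
    obtain ⟨d, rfl⟩ := Nat.exists_eq_add_of_le h2
    push_cast at hN
    refine mul_le_choose_of_mul_le_mul_choose (by omega) (by omega) le_rfl hl ?_
    calc 32 * s * 4 ^ s * (2 * s + d) ≤ 32 * s * 4 ^ s * (3 * s) := by gcongr
      _ = 96 * (s ^ 2 * 4 ^ s) := by ring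
      _ ≤ 96 * (2 * (2 * s + d).choose s) := Nat.mul_le_mul_left _
          (sq_mul_four_pow_le_choose hs (by omega) (by linarith))
      _ ≤ (96 * K + 192) * (2 * s + d).choose s := by
          rw [add_mul, ← mul_assoc]
          exact Nat.le_add_left _ _

end Estimates

section Threshold

open Filter

variable {n s t : ℕ}

lemma one_le_log_of_three_le {x : ℕ} (hx : 3 ≤ x) : 1 ≤ Real.log x := by
  have hx' : (3 : ℝ) ≤ x := by exact_mod_cast hx
  rw [Real.le_log_iff_exp_le (by linarith)]
  exact Real.exp_one_lt_three.le.trans hx'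

lemma one_le_eta {k t : ℕ} (hk : 3 ≤ k) : 1 ≤ eta k t := by
  have hlog := one_le_log_of_three_le hk
  have hk' : (3 : ℝ) ≤ k := by exact_mod_cast hk
  unfold eta
  split_ifs <;> linarith

lemma mul_add_one_le_of_add_eta_le (hts : 3 ≤ t + s)
    (h : (t + 1) * (s + 1) + eta (t + s) t ≤ (n : ℝ)) : (t + 1) * (s + 1) + 1 ≤ n := by
  have := one_le_eta (t := t) hts
  exact_mod_cast (by linarith : ((t : ℝ) + 1) * (s + 1) + 1 ≤ n)

lemma three_mul_le_or_log_le_of_add_eta_le {N : ℕ} (ht : 1 ≤ t) (hs : 2 ≤ s)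
    (h : (t + 1) * (s + 1) + eta (t + s) t ≤ ((N + (t + 1 + s) : ℕ) : ℝ)) :
    3 * s ≤ N ∨ 2 * (s : ℝ) + 8 * Real.log (s + 1) ≤ N := by
  have hlog : 0 ≤ Real.log (s + 1) := Real.log_nonneg (by simp)
  have heta := one_le_eta (t := t) (by omega : 3 ≤ t + s)
  push_cast at h
  obtain rfl | rfl | ht : t = 1 ∨ t = 2 ∨ 3 ≤ t := by omega
  · rw [eta, if_pos rfl] at h
    push_cast at h
    rw [add_comm 1 (s : ℝ)] at h
    exact Or.inr (by linarith)
  · obtain rfl | hs : s = 2 ∨ 3 ≤ s := by omega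
    · norm_num [eta] at h
      left
      have : 35 ≤ N := by exact_mod_cast (by linarith : (35 : ℝ) ≤ N)
      omega
    · rw [eta, if_neg (by omega), if_pos (by omega)] at h
      push_cast at h
      have hmono : Real.log (s + 1) ≤ Real.log (2 + s) :=
        Real.log_le_log (by positivity) (by linarith)
      exact Or.inr (by linarith)
  · have hts : t * s ≤ N := by exact_mod_cast (by linarith : (t : ℝ) * s ≤ N)
    exact Or.inl ((Nat.mul_le_mul_right s ht).trans hts)

lemma mul_choose_add_le_choose_succ {p r D : ℕ} (hp : t * (r + 1) + 1 + r ≤ p)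
    (hD : (r + 1) * D ≤ p.choose r) : t * p.choose r + D ≤ p.choose (r + 1) := by
  refine Nat.le_of_mul_le_mul_right (c := r + 1) ?_ r.succ_pos
  calc (t * p.choose r + D) * (r + 1) = p.choose r * (t * (r + 1)) + (r + 1) * D := by ring
    _ ≤ p.choose r * (t * (r + 1)) + p.choose r := Nat.add_le_add_left hD _
    _ = p.choose r * (t * (r + 1) + 1) := by ring
    _ ≤ p.choose r * (p - r) := Nat.mul_le_mul_left _ (by omega)
    _ = p.choose (r + 1) * (r + 1) := (Nat.choose_succ_right_eq p r).symm

lemma two_mul_mul_choose_le_choose {N u : ℕ} (hu : 2 ≤ u) (hts : t * s ≤ N) (h2s : 2 * s ≤ N) :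
    2 * t * s.choose u ≤ N.choose u := by
  calc 2 * t * s.choose u ≤ max 2 t ^ u * s.choose u := by
        refine Nat.mul_le_mul_right _ (le_trans ?_ (Nat.pow_le_pow_right (by omega) hu))
        rw [sq]
        exact Nat.mul_le_mul (le_max_left 2 t) (le_max_right 2 t)
    _ ≤ (max 2 t * s).choose u := pow_mul_choose_le_choose_mul _ s u
    _ ≤ N.choose u := Nat.choose_le_choose u (by rcases max_choice 2 t with h | h <;> rwa [h])

lemma mul_choose_add_le_choose {N u D : ℕ} (hu : 2 ≤ u) (hus : u ≤ s) (hts : t * s ≤ N)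
    (h2s : 2 * s ≤ N) (hD : 2 * D ≤ N.choose s) :
    t * (N + (s - u)).choose (s - u) + D ≤ (N + (s - u)).choose s := by
  have hmul := Nat.choose_mul (n := N + (s - u)) (Nat.sub_le s u)
  rw [Nat.add_sub_cancel, Nat.sub_sub_self hus, Nat.choose_symm hus] at hmul
  have hhalf : 2 * t * (N + (s - u)).choose (s - u) ≤ (N + (s - u)).choose s := by
    refine Nat.le_of_mul_le_mul_right ?_ (Nat.choose_pos hus)
    calc 2 * t * (N + (s - u)).choose (s - u) * s.choose u
        = (N + (s - u)).choose (s - u) * (2 * t * s.choose u) := by ring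
      _ ≤ (N + (s - u)).choose (s - u) * N.choose u :=
          Nat.mul_le_mul_left _ (two_mul_mul_choose_le_choose hu hts h2s)
      _ = (N + (s - u)).choose s * s.choose u := hmul.symm
  have hmono : N.choose s ≤ (N + (s - u)).choose s := Nat.choose_le_choose s (by omega)
  linarith

lemma eventually_gap_of_two_le : ∀ᶠ n : ℕ in atTop, ∀ s t : ℕ, 1 ≤ t → 2 ≤ s →
    (t + 1) * (s + 1) + eta (t + s) t ≤ (n : ℝ) → ∀ m, t + 2 ≤ m → m ≤ t + s + 1 →
      t * (n - m).choose (t + s + 1 - m) + 16 * s * 4 ^ s * Nat.clog 2 (n + 1) ≤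
        (n - m).choose s := by
  obtain ⟨K₁, hK₁⟩ := exists_mul_four_pow_mul_le_choose
  obtain ⟨K₂, hK₂⟩ := exists_mul_four_pow_mul_le_choose_of_log_le
  filter_upwards [eventually_mul_clog_le (2 * (K₁ + K₂))] with n hclog s t ht hs h m hm hms
  have hn := mul_add_one_le_of_add_eta_le (by omega) h
  obtain ⟨u, rfl⟩ := Nat.exists_eq_add_of_le (show t + 1 ≤ m by omega)
  obtain ⟨N, rfl⟩ := Nat.exists_eq_add_of_le' (show t + 1 + s ≤ n by nlinarith)
  have hN := three_mul_le_or_log_le_of_add_eta_le ht hs h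
  have hts : t * s + 1 ≤ N := by nlinarith
  have h2s : 2 * s + 1 ≤ N := by
    rcases hN with hN | hN
    · omega
    · have hlog := one_le_log_of_three_le (x := s + 1) (by omega)
      push_cast at hlog
      exact_mod_cast (by linarith : 2 * (s : ℝ) + 1 ≤ N)
  set l := Nat.clog 2 (N + (t + 1 + s) + 1)
  have hl : (K₁ + K₂) * l ≤ N := by
    have : t + s ≤ t * s + 1 := by nlinarith
    rw [mul_assoc] at hclog
    omega
  rw [show t + s + 1 - (t + 1 + u) = s - u by omega,
    show N + (t + 1 + s) - (t + 1 + u) = N + (s - u) by omega]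
  obtain rfl | hu : u = 1 ∨ 2 ≤ u := by omega
  · obtain ⟨r, rfl⟩ := Nat.exists_eq_add_of_le' (show 1 ≤ s by omega)
    rw [Nat.add_sub_cancel]
    refine mul_choose_add_le_choose_succ (by omega) ?_
    have := hK₁ r (N + r) l (by omega) (by omega) (by nlinarith)
    linarith
  · refine mul_choose_add_le_choose hu (by omega) (by omega) (by omega) ?_
    have := hK₂ s N l (by omega) hN (by nlinarith)
    linarith

lemma gap_of_eta_le_of_eq_one {D : ℕ} (ht : 2 ≤ t)
    (h : (t + 1) * (1 + 1) + eta (t + 1) t ≤ (n : ℝ)) (hD : 2 * D ≤ n) :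
    t + D ≤ n - (t + 2) := by
  rw [eta, if_neg (by omega), if_neg (by omega), if_neg (by omega), if_neg (by omega)] at h
  push_cast at h
  have : 20 * (t + 1) ≤ n := by exact_mod_cast (by linarith : 20 * ((t : ℝ) + 1) ≤ n)
  omega

lemma eventually_gap : ∀ᶠ n : ℕ in atTop, ∀ s t : ℕ, 3 ≤ t + s → 1 ≤ t → 1 ≤ s →
    (t + 1) * (s + 1) + eta (t + s) t ≤ (n : ℝ) → ∀ m, t + 2 ≤ m → m ≤ t + s + 1 →
      t * (n - m).choose (t + s + 1 - m) + 16 * s * 4 ^ s * Nat.clog 2 (n + 1) ≤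
        (n - m).choose s := by
  filter_upwards [eventually_gap_of_two_le, eventually_mul_clog_le 128]
    with n hgap hclog s t hts ht hs h m hm hms
  obtain rfl | hs : s = 1 ∨ 2 ≤ s := by omega
  · obtain rfl : m = t + 2 := by omega
    have := gap_of_eta_le_of_eq_one (t := t) (by omega) (by simpa using h)
      (show 2 * (64 * Nat.clog 2 (n + 1)) ≤ n by omega)
    simpa using this
  · exact hgap s t ht hs h m hm hms

end Threshold

/-! ### Stars -/

section Stars

variable {α : Type*} [Fintype α] [DecidableEq α] {k : ℕ} {S T A : Finset α}

/-- The full star of `S`: all `k`-sets containing `S`. -/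
def fullStar (k : ℕ) (S : Finset α) : Finset (Finset α) := {A ∈ powersetCard k univ | S ⊆ A}

lemma mem_fullStar : A ∈ fullStar k S ↔ #A = k ∧ S ⊆ A := by simp [fullStar, mem_powersetCard]

lemma card_fullStar (hS : #S ≤ k) :
    #(fullStar k S) = (Fintype.card α - #S).choose (k - #S) := by
  simp_rw [← card_filter_inter_eq subset_rfl hS, inter_eq_right, fullStar]

/-- The subfamilies of the full star of `S` that determine `S`, being contained in no other full
star whose kernel has the size of `S`. -/
def starFamilies (k : ℕ) (S : Finset α) : Finset (Finset (Finset α)) :=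
  {H ∈ (fullStar k S).powerset | ∀ T, #T = #S → (∀ e ∈ H, T ⊆ e) → T = S}

lemma mem_starFamilies {H : Finset (Finset α)} :
    H ∈ starFamilies k S ↔ H ⊆ fullStar k S ∧ ∀ T, #T = #S → (∀ e ∈ H, T ⊆ e) → T = S := by
  rw [starFamilies, mem_filter, mem_powerset]

lemma disjoint_starFamilies (hST : #S = #T) (hne : S ≠ T) :
    Disjoint (starFamilies k S) (starFamilies k T) := by
  refine disjoint_left.2 fun H hS hT ↦ hne ?_
  rw [mem_starFamilies] at hS hT
  exact hT.2 S hST fun e he ↦ (mem_fullStar.1 (hS.1 he)).2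

lemma powerset_fullStar_subset :
    (fullStar k S).powerset ⊆
      starFamilies k S ∪ Sᶜ.biUnion fun x ↦ (fullStar k (insert x S)).powerset := by
  intro H hH
  rw [mem_powerset] at hH
  by_contra hHS
  rw [mem_union, mem_starFamilies, not_or, not_and] at hHS
  refine hHS.1 hH fun T hT hTH ↦ eq_of_subset_of_card_le (fun x hx ↦ ?_) hT.ge
  by_contra hxS
  refine hHS.2 (mem_biUnion.2 ⟨x, mem_compl.2 hxS, mem_powerset.2 fun e he ↦ ?_⟩)
  obtain ⟨hek, hSe⟩ := mem_fullStar.1 (hH he)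
  exact mem_fullStar.2 ⟨hek, insert_subset (hTH e he hx) hSe⟩

lemma two_pow_choose_le_card_starFamilies_add (hS : #S < k) :
    2 ^ (Fintype.card α - #S).choose (k - #S) ≤ #(starFamilies k S) +
      Fintype.card α * 2 ^ (Fintype.card α - (#S + 1)).choose (k - (#S + 1)) := by
  rw [← card_fullStar hS.le, ← card_powerset]
  refine (card_le_card powerset_fullStar_subset).trans
    ((card_union_le _ _).trans (Nat.add_le_add_left ?_ _))
  refine (card_biUnion_le_card_mul _ _ _ fun x hx ↦ ?_).trans
    (Nat.mul_le_mul_right _ (card_le_univ Sᶜ))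
  have hxS := card_insert_of_notMem (mem_compl.1 hx)
  rw [card_powerset, card_fullStar (hxS ▸ hS), hxS]

end Stars

section Assembly

variable {n k s t : ℕ}

lemma card_intersecting_le (htk : t ≤ k) :
    Nat.card {H // IsKUniform n k H ∧ IsTIntersectingHyp n t H} ≤
      Nat.card {H // IsNontrivialHyp n k t H} + n.choose t * 2 ^ (n - t).choose (k - t) := by
  classical
  have hsub : ({H | IsKUniform n k H ∧ IsTIntersectingHyp n t H} : Finset _) ⊆
      ({H | IsNontrivialHyp n k t H} : Finset _) ∪
        (powersetCard t univ).biUnion fun S ↦ (fullStar k S).powerset := by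
    intro H hH
    obtain ⟨hU, hI⟩ := (mem_filter_univ H).1 hH
    rw [mem_union, mem_filter_univ, mem_biUnion]
    by_cases hT : IsTrivialHyp n t H
    · obtain ⟨S, hS, hSH⟩ := hT
      exact Or.inr ⟨S, mem_powersetCard_univ.2 hS, mem_powerset.2 fun e he ↦
        mem_fullStar.2 ⟨hU e he, hSH e he⟩⟩
    · exact Or.inl ⟨hU, hI, hT⟩
  rw [Nat.subtype_card {H | IsKUniform n k H ∧ IsTIntersectingHyp n t H} (by simp),
    Nat.subtype_card {H | IsNontrivialHyp n k t H} (by simp)]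
  refine (card_le_card hsub).trans ((card_union_le _ _).trans (Nat.add_le_add_left ?_ _))
  have hle := card_biUnion_le_card_mul (powersetCard t (univ : Finset (Fin n)))
    (fun S ↦ (fullStar k S).powerset) (2 ^ (n - t).choose (k - t)) fun S hS ↦ by
      rw [mem_powersetCard_univ] at hS
      rw [card_powerset, card_fullStar (hS.trans_le htk), hS, Fintype.card_fin]
  rwa [card_powersetCard, card_fin] at hle

lemma sum_card_starFamilies_le :
    ∑ S ∈ powersetCard t (univ : Finset (Fin n)), #(starFamilies k S) ≤
      Nat.card {H // IsKUniform n k H ∧ IsTIntersectingHyp n t H} := by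
  classical
  rw [Nat.subtype_card {H | IsKUniform n k H ∧ IsTIntersectingHyp n t H} (by simp),
    ← card_biUnion]
  · refine card_le_card fun H hH ↦ ?_
    obtain ⟨S, hS, hH⟩ := mem_biUnion.1 hH
    have hstar {e} (he : e ∈ H) := mem_fullStar.1 ((mem_starFamilies.1 hH).1 he)
    rw [mem_filter_univ, ← mem_powersetCard_univ.1 hS]
    exact ⟨fun e he ↦ (hstar he).1, fun e he f hf ↦
      card_le_card (subset_inter (hstar he).2 (hstar hf).2)⟩
  · exact fun S hS T hT ↦ disjoint_starFamilies
      ((mem_powersetCard_univ.1 hS).trans (mem_powersetCard_univ.1 hT).symm)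

lemma choose_mul_two_pow_le_card_intersecting_add (htk : t < k) :
    n.choose t * 2 ^ (n - t).choose (k - t) ≤
      Nat.card {H // IsKUniform n k H ∧ IsTIntersectingHyp n t H} +
        n.choose t * (n * 2 ^ (n - (t + 1)).choose (k - (t + 1))) := by
  have hsum := sum_le_sum fun S (hS : S ∈ powersetCard t (univ : Finset (Fin n))) ↦ by
    rw [mem_powersetCard_univ] at hS
    simpa only [hS, Fintype.card_fin] using
      two_pow_choose_le_card_starFamilies_add (S := S) (k := k) (hS.trans_lt htk)
  simp only [sum_add_distrib, sum_const, card_powersetCard, card_fin, smul_eq_mul] at hsum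
  exact hsum.trans (Nat.add_le_add_right sum_card_starFamilies_le _)

lemma le_choose_self {p r : ℕ} (hr : 1 ≤ r) (h : r < p) : p ≤ p.choose r := by
  obtain ⟨r, rfl⟩ := Nat.exists_eq_add_of_le' hr
  have hle := choose_succ_mul_le_choose_succ_mul (q := r + 1 + 1) h r
  rw [Nat.choose_succ_self_right, mul_comm] at hle
  exact Nat.le_of_mul_le_mul_right hle (by omega)

lemma mul_two_pow_choose_mul_le {p r : ℕ} (hrp : r + 1 < p)
    (hn : 2 * Nat.clog 2 (n + 1) ≤ p) :
    n * 2 ^ p.choose r * (n + 1) ≤ 2 ^ (p + 1).choose (r + 1) := by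
  have hclog : n + 1 ≤ 2 ^ Nat.clog 2 (n + 1) := Nat.le_pow_clog one_lt_two _
  calc n * 2 ^ p.choose r * (n + 1) ≤ (n + 1) * 2 ^ p.choose r * (n + 1) :=
        Nat.mul_le_mul_right _ (Nat.mul_le_mul_right _ n.le_succ)
    _ = 2 ^ p.choose r * (n + 1) ^ 2 := by ring
    _ ≤ 2 ^ p.choose r * (2 ^ Nat.clog 2 (n + 1)) ^ 2 := by gcongr
    _ = 2 ^ (p.choose r + 2 * Nat.clog 2 (n + 1)) := by ring
    _ ≤ 2 ^ (p + 1).choose (r + 1) := by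
        rw [Nat.choose_succ_succ]
        exact Nat.pow_le_pow_right two_pos
          (Nat.add_le_add_left (hn.trans (le_choose_self (by omega) hrp)) _)

lemma choose_mul_two_pow_mul_le_card_intersecting_mul (hs : 1 ≤ s)
    (hn : (t + 1) * (s + 1) + 1 ≤ n) (hclog : 8 * Nat.clog 2 (n + 1) ≤ n) :
    n.choose t * 2 ^ (n - t).choose s * n ≤
      Nat.card {H // IsKUniform n (t + s) H ∧ IsTIntersectingHyp n t H} * (n + 1) := by
  obtain ⟨r, rfl⟩ := Nat.exists_eq_add_of_le' hs
  have hle := choose_mul_two_pow_le_card_intersecting_add (n := n) (show t < t + (r + 1) by omega)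
  obtain ⟨p, rfl⟩ := Nat.exists_eq_add_of_le' (show t + 1 ≤ n by nlinarith)
  have hbad := mul_two_pow_choose_mul_le (n := p + (t + 1)) (p := p) (r := r) (by nlinarith)
    (by nlinarith)
  rw [show t + (r + 1) - (t + 1) = r by omega, Nat.add_sub_cancel, Nat.add_sub_cancel_left] at hle
  rw [show p + (t + 1) - t = p + 1 by omega] at hle ⊢
  have := Nat.mul_le_mul_left ((p + (t + 1)).choose t) hbad
  nlinarith

lemma add_two_mul_mul_choose_add_one_le (hs : 1 ≤ s) :
    s + 2 * s * (2 * s + 2).choose (s + 1) + 1 ≤ 16 * s * 4 ^ s := by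
  have hchoose : (2 * s + 2).choose (s + 1) ≤ 4 ^ (s + 1) := by
    rw [show 4 = 2 ^ 2 by norm_num, ← pow_mul]
    exact Nat.choose_le_two_pow (2 * (s + 1)) (s + 1)
  have hpow : 1 ≤ 4 ^ s := Nat.one_le_pow _ _ (by norm_num)
  rw [pow_succ] at hchoose
  nlinarith [Nat.mul_le_mul_left s hchoose, Nat.mul_le_mul_left s hpow]

lemma card_isNontrivialHyp_mul_le (ht : 1 ≤ t) (hs : 1 ≤ s) (hn : (t + 1) * (s + 1) + 1 ≤ n)
    (hgap : ∀ m, t + 2 ≤ m → m ≤ t + s + 1 →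
      t * (n - m).choose (t + s + 1 - m) + 16 * s * 4 ^ s * Nat.clog 2 (n + 1) ≤
        (n - m).choose s) :
    Nat.card {H // IsNontrivialHyp n (t + s) t H} * (n + 1) ≤
      n.choose t * 2 ^ (n - t).choose s := by
  set l := Nat.clog 2 (n + 1)
  have hF (F) (hF : IsNontrivialHyp n (t + s) t F) :
      #F + 16 * s * 4 ^ s * l ≤ (n - t).choose s := by
    obtain ⟨m, htm, hms, hle⟩ := hF.exists_card_add_choose_le ht hs hn
    have := hgap m htm hms
    omega
  rcases isEmpty_or_nonempty {H // IsNontrivialHyp n (t + s) t H} with hE | ⟨F, hFn⟩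
  · simp
  obtain ⟨M, hM⟩ := Nat.exists_eq_add_of_le' ((Nat.le_add_left _ _).trans (hF F hFn))
  set e := s + 2 * s * (2 * s + 2).choose (s + 1)
  calc Nat.card {H // IsNontrivialHyp n (t + s) t H} * (n + 1)
      ≤ n.choose t * (n + 1) ^ e * 2 ^ M * (n + 1) := by
        refine Nat.mul_le_mul_right _ (card_isNontrivialHyp_le_mul_two_pow ht (by nlinarith) ?_)
        exact fun F hFn ↦ by have := hF F hFn; omega
    _ = n.choose t * ((n + 1) ^ (e + 1) * 2 ^ M) := by ring
    _ ≤ n.choose t * ((2 ^ l) ^ (16 * s * 4 ^ s) * 2 ^ M) := by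
        refine Nat.mul_le_mul_left _ (Nat.mul_le_mul_right _ ?_)
        exact (Nat.pow_le_pow_left (Nat.le_pow_clog one_lt_two _) _).trans
          (Nat.pow_le_pow_right (by positivity) (add_two_mul_mul_choose_add_one_le hs))
    _ = n.choose t * 2 ^ (n - t).choose s := by
        rw [hM]
        ring

end Assembly

theorem typical_structure_of_t_intersecting_hypergraphs (ε : ℝ) (hε : 0 < ε) :
    ∃ n₀ : ℕ, ∀ n : ℕ, n₀ ≤ n → ∀ k t : ℕ, 3 ≤ k → 1 ≤ t → t < k →
      ((t + 1 : ℝ) * (k - t + 1 : ℝ) + eta k t ≤ (n : ℝ)) →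
      (Nat.card {H : Finset (Finset (Fin n)) //
          IsKUniform n k H ∧ IsTIntersectingHyp n t H ∧ ¬ IsTrivialHyp n t H} : ℝ) ≤
        ε * (n.choose t : ℝ) * (2 : ℝ) ^ ((n - t).choose (k - t)) ∧
      (1 - ε) * (n.choose t : ℝ) * (2 : ℝ) ^ ((n - t).choose (k - t)) ≤
        (Nat.card {H : Finset (Finset (Fin n)) //
          IsKUniform n k H ∧ IsTIntersectingHyp n t H} : ℝ) ∧
      (Nat.card {H : Finset (Finset (Fin n)) //
          IsKUniform n k H ∧ IsTIntersectingHyp n t H} : ℝ) ≤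
        (1 + ε) * (n.choose t : ℝ) * (2 : ℝ) ^ ((n - t).choose (k - t)) := by
  obtain ⟨n₀, hn₀⟩ := Filter.eventually_atTop.1 (eventually_gap.and ((eventually_mul_clog_le 8).and
    (tendsto_natCast_atTop_atTop.eventually_ge_atTop (1 / ε))))
  refine ⟨n₀, fun n hn k t hk ht htk h ↦ ?_⟩
  obtain ⟨hgap, hclog, hεn⟩ := hn₀ n hn
  obtain ⟨s, rfl⟩ := Nat.exists_eq_add_of_le htk.le
  have hs : 1 ≤ s := by omega
  rw [Nat.cast_add, add_sub_cancel_left] at h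
  rw [div_le_iff₀ hε] at hεn
  have hlarge := mul_add_one_le_of_add_eta_le hk h
  have hnontriv := card_isNontrivialHyp_mul_le ht hs hlarge (hgap s t hk ht hs h)
  have hlower := choose_mul_two_pow_mul_le_card_intersecting_mul hs hlarge hclog
  have hupper := card_intersecting_le (n := n) (Nat.le_add_right t s)
  rw [Nat.add_sub_cancel_left] at hupper ⊢
  simp only [IsNontrivialHyp] at hnontriv hupper
  rify at hnontriv hlower hupper
  simp only [mul_assoc (_ - _), mul_assoc (_ + _), mul_assoc ε]
  set X : ℝ := n.choose t * 2 ^ (n - t).choose s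
  have hX : X ≤ ε * X * (n + 1) := by nlinarith [show 0 ≤ X by positivity]
  have hn1 : (0 : ℝ) < n + 1 := by positivity
  have hsmall := le_of_mul_le_mul_right (hnontriv.trans hX) hn1
  exact ⟨hsmall, le_of_mul_le_mul_right (by nlinarith) hn1, by linarith⟩
end

section
/- Let I(n,k) denote the number of intersecting k-uniform hypergraphs on [n]. Then for all integers k ≥ 3 and n ≥ 2k+1 one has log I(n,k) ≥ binom(n−1,k−1), and for every ε > 0 there exists n₀ such that log I(n,k) ≤ (1+ε)·binom(n−1,k−1) for all n ≥ n₀ and all integers k with 3 ≤ k ≤ (n−1)/2. -/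
/-- A hypergraph is intersecting if any two of its edges have nonempty intersection. -/
def IsIntersectingHyp (n : ℕ) (H : Finset (Finset (Fin n))) : Prop :=
  ∀ e ∈ H, ∀ f ∈ H, (e ∩ f).Nonempty

/-- `numIntersecting n k` is the number `I(n,k)` of intersecting `k`-uniform
hypergraphs on `[n]`. -/
noncomputable def numIntersecting (n k : ℕ) : ℕ :=
  Nat.card {H : Finset (Finset (Fin n)) // IsKUniform n k H ∧ IsIntersectingHyp n H}

/-!
Intersecting families are the independent sets of the Kneser graph. Any subset of a star is
intersecting, which gives the lower bound. For the upper bound, average Katona's cycle argument over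
all cyclic orders: in any family of more than `(1 + δ) * (n - 1).choose (k - 1)` sets of size `k`,
some member is disjoint from at least `δ * (n - k).choose (k - 1) / (2 * k)` others. Branch on
whether such a set belongs to the intersecting family being counted (the Kleitman–Winston
algorithm): if it does, its many neighbours in the Kneser graph are excluded. Hence there are few
ways to proceed before at most `(1 + δ) * (n - 1).choose (k - 1)` sets remain undecided, and these
contribute the main term.
-/

open Finset MulAction
open scoped BigOperators Pointwise

lemma card_le_add_card_filter_product {α : Type*} {r : α → α → Prop} [DecidableRel r]
    {X : Finset α} {a : ℕ} (h : ∀ Y ⊆ X, (∀ x ∈ Y, ∀ y ∈ Y, ¬ r x y) → #Y ≤ a) :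
    #X ≤ a + #{p ∈ X ×ˢ X | r p.1 p.2} := by
  classical
  rw [← card_filter_add_card_filter_not (s := X) (fun x ↦ ∀ y ∈ X, ¬ r x y)]
  gcongr
  · exact h _ (filter_subset _ _) fun x hx y hy ↦ (mem_filter.1 hx).2 y (mem_filter.1 hy).1
  · refine card_le_card_of_surjOn Prod.fst fun x hx ↦ ?_
    simpa [and_assoc] using hx

lemma choose_le_choose_of_add_le {n r m : ℕ} (hrm : r ≤ m) (hmn : m + r ≤ n) :
    n.choose r ≤ n.choose m := by
  have lower_half : ∀ m, r ≤ m → m ≤ n / 2 → n.choose r ≤ n.choose m := fun m hrm ↦ by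
    induction m, hrm using Nat.le_induction with
    | base => exact fun _ ↦ le_rfl
    | succ m _ ih =>
      exact fun hm ↦ (ih (by omega)).trans (Nat.choose_le_succ_of_lt_half_left (by omega))
  rcases le_or_gt m (n / 2) with hm | hm
  · exact lower_half m hrm hm
  · rw [← Nat.choose_symm (show m ≤ n by omega)]
    exact lower_half (n - m) (by omega) (by omega)

lemma expect_smul_eq_expect_orbit {G Ω M : Type*} [Group G] [Fintype G] [MulAction G Ω]
    [AddCommMonoid M] [Module ℚ≥0 M] (f : Ω → M) {a : Ω} {O : Finset Ω}
    (hO : (O : Set Ω) = orbit G a) : 𝔼 g : G, f (g • a) = 𝔼 x ∈ O, f x := by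
  have mem_O {x : Ω} : x ∈ O ↔ x ∈ orbit G a := by rw [← mem_coe, hO]
  have const_on_O : ∀ x ∈ O, 𝔼 g : G, f (g • x) = 𝔼 g : G, f (g • a) := fun x hx ↦ by
    obtain ⟨h, rfl⟩ := mem_O.1 hx
    exact Fintype.expect_equiv (Equiv.mulRight h) _ _ fun g ↦ by simp [mul_smul]
  have invariant (g : G) : 𝔼 x ∈ O, f (g • x) = 𝔼 x ∈ O, f x :=
    expect_equiv (MulAction.toPerm g) (fun x ↦ by simp [mem_O, ← orbit_eq_iff]) fun _ _ ↦ rfl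
  calc 𝔼 g : G, f (g • a) = 𝔼 x ∈ O, 𝔼 g : G, f (g • x) := by
        rw [expect_congr rfl const_on_O, expect_const ⟨a, mem_O.2 (mem_orbit_self a)⟩]
    _ = 𝔼 g : G, 𝔼 x ∈ O, f (g • x) := expect_comm _ _ _
    _ = 𝔼 x ∈ O, f x := by simp only [invariant, Fintype.expect_const]

section Permutations

variable {α : Type*} [DecidableEq α]

lemma exists_perm_smul_eq_and_smul_eq [Finite α] {s t s' t' : Finset α} (hst : Disjoint s t)
    (hst' : Disjoint s' t') (hs : #s = #s') (ht : #t = #t') :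
    ∃ σ : Equiv.Perm α, σ • s = s' ∧ σ • t = t' := by
  let e := (Equiv.Finset.union s t hst).symm.trans <|
    ((equivOfCardEq hs).sumCongr (equivOfCardEq ht)).trans (Equiv.Finset.union s' t' hst')
  refine ⟨e.extendSubtype, eq_of_subset_of_card_le ?_ (by simp [hs]),
    eq_of_subset_of_card_le ?_ (by simp [ht])⟩
  · refine image_subset_iff.2 fun x hx ↦ ?_
    rw [Equiv.Perm.smul_def, e.extendSubtype_apply_of_mem x (mem_union_left t hx)]
    simp [e, hx]
  · refine image_subset_iff.2 fun x hx ↦ ?_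
    rw [Equiv.Perm.smul_def, e.extendSubtype_apply_of_mem x (mem_union_right s hx)]
    simp [e, hx]

lemma orbit_perm_finset [Finite α] (s : Finset α) :
    orbit (Equiv.Perm α) s = {s' | #s' = #s} := by
  ext s'
  refine ⟨?_, fun h ↦ ?_⟩
  · rintro ⟨σ, rfl⟩
    exact card_smul_finset σ s
  · obtain ⟨σ, hσ, -⟩ := exists_perm_smul_eq_and_smul_eq (disjoint_empty_right s)
      (disjoint_empty_right s') h.symm rfl
    exact ⟨σ, hσ⟩

lemma orbit_perm_disjoint_pair [Finite α] {s t : Finset α} (hst : Disjoint s t) :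
    orbit (Equiv.Perm α) (s, t) = {p | #p.1 = #s ∧ #p.2 = #t ∧ Disjoint p.1 p.2} := by
  ext ⟨s', t'⟩
  refine ⟨?_, fun ⟨hs, ht, hst'⟩ ↦ ?_⟩
  · rintro ⟨σ, h⟩
    simp only [Prod.smul_mk, Prod.mk.injEq] at h
    obtain ⟨rfl, rfl⟩ := h
    exact ⟨card_smul_finset σ s, card_smul_finset σ t, by
      simpa [← disjoint_coe, Set.disjoint_smul_set] using hst⟩
  · obtain ⟨σ, hs, ht⟩ := exists_perm_smul_eq_and_smul_eq hst hst' hs.symm ht.symm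
    exact ⟨σ, Prod.ext hs ht⟩

variable [Fintype α]

lemma card_filter_disjoint_powersetCard (k l : ℕ) :
    #{p ∈ powersetCard k (univ : Finset α) ×ˢ powersetCard l univ | Disjoint p.1 p.2} =
      (Fintype.card α).choose k * (Fintype.card α - k).choose l := by
  have disjoint_from {s : Finset α} (hs : s ∈ powersetCard k univ) :
      #{t ∈ powersetCard l univ | Disjoint s t} = (Fintype.card α - k).choose l := by
    rw [← (mem_powersetCard.1 hs).2, ← card_compl, ← card_powersetCard]
    congr 1
    ext t
    simp [subset_compl_iff_disjoint_left, and_comm]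
  rw [card_filter, sum_product]
  simp only [← card_filter]
  rw [sum_congr rfl fun s hs ↦ disjoint_from hs]
  simp

variable {k : ℕ} {S : Finset (Finset α)}

lemma expect_perm_smul_mem (hS : (S : Set (Finset α)).Sized k) {s : Finset α} (hs : #s = k) :
    𝔼 σ : Equiv.Perm α, (if σ • s ∈ S then 1 else 0 : ℝ) = #S / (Fintype.card α).choose k := by
  have hO : (powersetCard k (univ : Finset α) : Set (Finset α)) = orbit (Equiv.Perm α) s := by
    ext; simp [orbit_perm_finset, hs]
  have hsub : S ⊆ powersetCard k univ := hS.subset_powersetCard_univ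
  rw [expect_smul_eq_expect_orbit (fun t ↦ if t ∈ S then (1 : ℝ) else 0) hO,
    expect_eq_sum_div_card, sum_boole, filter_mem_eq_inter, inter_eq_right.2 hsub,
    card_powersetCard, card_univ]

lemma expect_perm_smul_mem_and_smul_mem (hS : (S : Set (Finset α)).Sized k) {s t : Finset α}
    (hs : #s = k) (ht : #t = k) (hst : Disjoint s t) :
    𝔼 σ : Equiv.Perm α, (if σ • s ∈ S ∧ σ • t ∈ S then 1 else 0 : ℝ) =
      #{p ∈ S ×ˢ S | Disjoint p.1 p.2} /
        ((Fintype.card α).choose k * (Fintype.card α - k).choose k) := by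
  let O : Finset (Finset α × Finset α) :=
    {p ∈ powersetCard k univ ×ˢ powersetCard k univ | Disjoint p.1 p.2}
  have hO : (O : Set (Finset α × Finset α)) = orbit (Equiv.Perm α) (s, t) := by
    ext; simp [O, orbit_perm_disjoint_pair hst, hs, ht, and_assoc]
  have hO_filter : {p ∈ O | p.1 ∈ S ∧ p.2 ∈ S} = {p ∈ S ×ˢ S | Disjoint p.1 p.2} := by
    ext p
    simp only [O, mem_filter, mem_product, mem_powersetCard_univ]
    exact ⟨fun h ↦ ⟨h.2, h.1.2⟩, fun h ↦ ⟨⟨⟨hS h.1.1, hS h.1.2⟩, h.2⟩, h.1⟩⟩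
  calc _ = 𝔼 p ∈ O, (if p.1 ∈ S ∧ p.2 ∈ S then 1 else 0 : ℝ) :=
        expect_smul_eq_expect_orbit
          (fun p : Finset α × Finset α ↦ if p.1 ∈ S ∧ p.2 ∈ S then (1 : ℝ) else 0) hO
    _ = _ := by
        rw [expect_eq_sum_div_card, sum_boole, hO_filter, card_filter_disjoint_powersetCard,
          Nat.cast_mul]

end Permutations

section Cycle

variable {n k : ℕ} [NeZero n]

/-- The arc of `k` consecutive points starting at `i` on the cycle `Fin n` (all of the cycle if
`n ≤ k`), as in Katona's cycle method. The subtraction is that of `Fin n`, which wraps around. -/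
def circularArc (n k : ℕ) [NeZero n] (i : Fin n) : Finset (Fin n) :=
  {x | ((x - i : Fin n) : ℕ) < k}

/-- The ordered pairs of points at distance at least `k` on the cycle `Fin n`, so that the arcs of
length `k` starting at them are disjoint. Distance at least `k` is encoded as the cyclic difference
lying in `[k, n - k]`. -/
def farPairs (n k : ℕ) [NeZero n] : Finset (Fin n × Fin n) :=
  {p | ((p.2 - p.1 : Fin n) : ℕ) ∈ Icc k (n - k)}

lemma card_circularArc (hk : k ≤ n) (i : Fin n) : #(circularArc n k i) = k := by
  have card_shift : #(circularArc n k i) = #{x : Fin n | (x : ℕ) < k} :=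
    card_equiv (Equiv.subRight i) fun x ↦ by simp [circularArc]
  rw [card_shift, Fin.card_filter_val_lt, min_eq_right hk]

lemma val_sub_eq_ite (i j x : Fin n) :
    (x - i).val = if n ≤ (x - j).val + (j - i).val then (x - j).val + (j - i).val - n
      else (x - j).val + (j - i).val := by
  rw [← sub_add_sub_cancel x j i, Fin.val_add_eq_ite]

lemma disjoint_circularArc_of_mem_farPairs {i j : Fin n} (hij : (i, j) ∈ farPairs n k) :
    Disjoint (circularArc n k i) (circularArc n k j) := by
  simp only [farPairs, mem_filter_univ, mem_Icc] at hij
  refine disjoint_left.2 fun x hi hj ↦ ?_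
  simp only [circularArc, mem_filter_univ] at hi hj
  have := val_sub_eq_ite i j x
  split_ifs at this <;> omega

lemma card_farPairs (hk : 1 ≤ k) (hn : 2 * k ≤ n) :
    #(farPairs n k) = n * (n - 2 * k + 1) := by
  have card_shear : #(farPairs n k) =
      #((univ : Finset (Fin n)) ×ˢ ({d : Fin n | (d : ℕ) ∈ Icc k (n - k)} : Finset (Fin n))) :=
    card_equiv ((Equiv.refl (Fin n)).prodShear fun i ↦ Equiv.subRight i) fun p ↦ by
      simp [farPairs]
  have map_val : ({d : Fin n | (d : ℕ) ∈ Icc k (n - k)} : Finset (Fin n)).map Fin.valEmbedding =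
      Icc k (n - k) := by
    ext d
    simp only [mem_map, mem_filter_univ, Fin.valEmbedding_apply]
    exact ⟨by rintro ⟨d, hd, rfl⟩; exact hd,
      fun hd ↦ ⟨⟨d, by have := mem_Icc.1 hd; omega⟩, hd, rfl⟩⟩
  rw [card_shear, card_product, card_univ, Fintype.card_fin, ← card_map Fin.valEmbedding, map_val,
    Nat.card_Icc]
  congr 1
  omega

lemma card_le_of_forall_notMem_farPairs (hn : 2 * k ≤ n) {X : Finset (Fin n)}
    (hX : ∀ i ∈ X, ∀ j ∈ X, (i, j) ∉ farPairs n k) : #X ≤ k := by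
  rcases X.eq_empty_or_nonempty with rfl | ⟨i, hi⟩
  · simp
  simp only [farPairs, mem_filter_univ, mem_Icc, not_and, not_le] at hX
  -- Differences to `i` lie in `[0, k)` or `(n - k, n)`. Folding the second interval onto the first
  -- identifies only points whose difference is `n - k`, and these form a far pair.
  let fold (j : Fin n) : ℕ := if (j - i).val < k then (j - i).val else (j - i).val - (n - k)
  rw [← card_range k]
  refine card_le_card_of_injOn fold (fun j hj ↦ ?_) fun j hj j' hj' h ↦ ?_
  · have := hX i hi j hj
    simp only [fold, coe_range, Set.mem_Iio]
    split_ifs <;> omega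
  · by_contra hne
    have val_ne : (j - i).val ≠ (j' - i).val := fun h ↦ hne (sub_left_injective (Fin.ext h))
    have := hX i hi j hj
    have := hX i hi j' hj'
    have := hX j hj j' hj'
    have := hX j' hj' j hj
    have := val_sub_eq_ite i j j'
    have := val_sub_eq_ite i j' j
    simp only [fold] at h
    split_ifs at * <;> omega

variable {S : Finset (Finset (Fin n))}

lemma card_filter_smul_circularArc_le (hn : 2 * k ≤ n) (σ : Equiv.Perm (Fin n)) :
    #{i | σ • circularArc n k i ∈ S} ≤
      k + #{p ∈ farPairs n k | σ • circularArc n k p.1 ∈ S ∧ σ • circularArc n k p.2 ∈ S} := by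
  convert card_le_add_card_filter_product (r := fun i j ↦ (i, j) ∈ farPairs n k)
    (X := {i | σ • circularArc n k i ∈ S})
    fun Y _ hY ↦ card_le_of_forall_notMem_farPairs hn hY using 3
  ext p
  simp [and_comm]

lemma mul_card_div_choose_le_add_disjoint_pairs (hk : 1 ≤ k) (hn : 2 * k ≤ n)
    (hS : (S : Set (Finset (Fin n))).Sized k) :
    (n * (#S / n.choose k) : ℝ) ≤ k + (n * (n - 2 * k + 1) : ℕ) *
      (#{p ∈ S ×ˢ S | Disjoint p.1 p.2} / (n.choose k * (n - k).choose k)) := by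
  have card_arc := card_circularArc (n := n) (k := k) (by omega)
  calc (n * (#S / n.choose k) : ℝ)
      = ∑ i : Fin n, 𝔼 σ : Equiv.Perm (Fin n),
          (if σ • circularArc n k i ∈ S then 1 else 0 : ℝ) := by
        simp [expect_perm_smul_mem hS (card_arc _)]
    _ = 𝔼 σ : Equiv.Perm (Fin n), (#{i | σ • circularArc n k i ∈ S} : ℝ) := by
        simp [← expect_sum_comm]
    _ ≤ 𝔼 σ : Equiv.Perm (Fin n), (k + #{p ∈ farPairs n k |
          σ • circularArc n k p.1 ∈ S ∧ σ • circularArc n k p.2 ∈ S} : ℝ) := by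
        gcongr with σ
        exact_mod_cast card_filter_smul_circularArc_le hn σ
    _ = k + ∑ p ∈ farPairs n k, 𝔼 σ : Equiv.Perm (Fin n),
          (if σ • circularArc n k p.1 ∈ S ∧ σ • circularArc n k p.2 ∈ S then 1 else 0 : ℝ) := by
        simp [← expect_sum_comm, expect_add_distrib]
    _ = _ := by
        rw [sum_congr rfl fun p hp ↦ expect_perm_smul_mem_and_smul_mem hS (card_arc _) (card_arc _)
          (disjoint_circularArc_of_mem_farPairs hp), sum_const, card_farPairs hk hn]
        simp

end Cycle

lemma choose_mul_card_le_add_disjoint_pairs {n k : ℕ} {S : Finset (Finset (Fin n))}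
    (hk : 1 ≤ k) (hn : 2 * k ≤ n) (hS : (S : Set (Finset (Fin n))).Sized k) :
    (n - k).choose (k - 1) * #S ≤ (n - k).choose (k - 1) * (n - 1).choose (k - 1) +
      k * #{p ∈ S ×ˢ S | Disjoint p.1 p.2} := by
  have : NeZero n := ⟨by omega⟩
  obtain ⟨k, rfl⟩ := Nat.exists_eq_add_of_le' hk
  obtain ⟨n, rfl⟩ := Nat.exists_eq_add_of_le' (show 1 ≤ n by omega)
  set P := #{p ∈ S ×ˢ S | Disjoint p.1 p.2}
  have average := mul_card_div_choose_le_add_disjoint_pairs hk hn hS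
  have star : (n + 1 : ℝ) * n.choose k = (n + 1).choose (k + 1) * (k + 1) := by
    exact_mod_cast Nat.add_one_mul_choose_eq n k
  have degree : ((n - k).choose (k + 1) * (k + 1) : ℝ) = (n - k).choose k * (n - 2 * k : ℕ) := by
    have := Nat.choose_succ_right_eq (n - k) k
    rw [show n - k - k = n - 2 * k by omega] at this
    exact_mod_cast this
  have hN : (0 : ℝ) < (n + 1).choose (k + 1) := by exact_mod_cast Nat.choose_pos (by omega)
  have hD : (0 : ℝ) < (n - k).choose (k + 1) := by exact_mod_cast Nat.choose_pos (by omega)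
  rw [show n + 1 - (k + 1) = n - k by omega, show n + 1 - 2 * (k + 1) + 1 = n - 2 * k by omega]
    at average
  simp only [Nat.add_sub_cancel, show n + 1 - (k + 1) = n - k by omega]
  field_simp at average
  push_cast at average
  rw [← star] at average
  have supersaturation :
      ((n - k).choose k * #S : ℝ) ≤ (n - k).choose k * n.choose k + (k + 1) * P := by
    have hm : (0 : ℝ) < (n - 2 * k : ℕ) := by exact_mod_cast (by omega)
    refine le_of_mul_le_mul_left ?_ (mul_pos hm n.cast_add_one_pos)
    linear_combination (k + 1 : ℝ) * average - (n + 1 : ℝ) * (#S - n.choose k) * degree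
  exact_mod_cast supersaturation

lemma pow_add_pow_le_pow_succ {R : Type*} [CommRing R] [LinearOrder R] [IsStrictOrderedRing R]
    {β : R} {d e m : ℕ} (hβ : 1 ≤ β) (hd : 1 ≤ (β - 1) * β ^ d) (hm : e + d ≤ m) :
    β ^ m + β ^ e ≤ β ^ (m + 1) := by
  calc β ^ m + β ^ e ≤ β ^ m + β ^ e * ((β - 1) * β ^ d) := by
        gcongr
        exact le_mul_of_one_le_right (pow_nonneg (zero_le_one.trans hβ) e) hd
    _ = β ^ m + (β - 1) * β ^ (e + d) := by ring
    _ ≤ β ^ m + (β - 1) * β ^ m := by gcongr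
    _ = β ^ (m + 1) := by ring

section IndependentSets

variable {V : Type*} [DecidableEq V] (G : SimpleGraph V) [DecidableRel G.Adj]

/-- The independent sets of the graph `G` that are contained in the finite vertex set `S`; their
number is what the Kleitman–Winston argument bounds. -/
def independentSubsets (S : Finset V) : Finset (Finset V) :=
  {T ∈ S.powerset | G.IsIndepSet T}

variable {G} {S : Finset V}

lemma card_independentSubsets_le_two_pow : #(independentSubsets G S) ≤ 2 ^ #S :=
  (card_filter_le _ _).trans (card_powerset S).le

lemma card_independentSubsets_le_add {v : V} :
    #(independentSubsets G S) ≤ #(independentSubsets G (S.erase v)) +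
      #(independentSubsets G {u ∈ S.erase v | ¬ G.Adj v u}) := by
  rw [← card_filter_add_card_filter_not (s := independentSubsets G S) (v ∉ ·)]
  refine add_le_add (card_le_card fun T hT ↦ ?_)
    (card_le_card_of_injOn (·.erase v) (fun T hT ↦ ?_) fun T hT T' hT' h ↦ ?_)
  · simp only [independentSubsets, mem_filter, mem_powerset] at hT ⊢
    exact ⟨subset_erase.2 ⟨hT.1.1, hT.2⟩, hT.1.2⟩
  · simp only [independentSubsets, coe_filter, mem_filter, mem_powerset, not_not,
      Set.mem_ofPred_eq] at hT ⊢
    obtain ⟨⟨hTS, hTi⟩, hvT⟩ := hT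
    refine ⟨fun u hu ↦ mem_filter.2 ⟨erase_subset_erase v hTS hu, ?_⟩, hTi.mono (by simp)⟩
    exact hTi hvT (mem_of_mem_erase hu) (ne_of_mem_erase hu).symm
  · simp only [coe_filter, Set.mem_ofPred_eq, not_not] at hT hT'
    exact erase_injOn' v hT.2 hT'.2 h

lemma card_filter_not_adj_add {v : V} (hv : v ∈ S) :
    #{u ∈ S.erase v | ¬ G.Adj v u} + #{u ∈ S | G.Adj v u} + 1 = #S := by
  have : {u ∈ S | G.Adj v u} = {u ∈ S.erase v | G.Adj v u} := by
    rw [filter_erase, erase_eq_of_notMem (by simp)]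
  rw [this, add_comm #_, card_filter_add_card_filter_not, card_erase_add_one hv]

lemma card_independentSubsets_le {β M : ℝ} {d : ℕ} (hβ : 1 ≤ β)
    (hd : 1 ≤ (β - 1) * β ^ d)
    (hS : ∀ T ⊆ S, M < #T → ∃ v ∈ T, d ≤ #{u ∈ T | G.Adj v u}) :
    (#(independentSubsets G S) : ℝ) ≤ 2 ^ M * β ^ #S := by
  induction S using Finset.strongInduction with
  | H S ih =>
    rcases le_or_gt (#S : ℝ) M with hSM | hSM
    · calc (#(independentSubsets G S) : ℝ) ≤ 2 ^ #S :=
            mod_cast card_independentSubsets_le_two_pow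
        _ ≤ 2 ^ M := by
            rw [← Real.rpow_natCast]
            exact Real.rpow_le_rpow_of_exponent_le one_le_two hSM
        _ ≤ 2 ^ M * β ^ #S := le_mul_of_one_le_right (by positivity) (one_le_pow₀ hβ)
    obtain ⟨v, hv, hdv⟩ := hS S Subset.rfl hSM
    have ih_erase := ih _ (erase_ssubset hv) fun T hT ↦ hS T (hT.trans (erase_subset v S))
    have ih_filter := ih {u ∈ S.erase v | ¬ G.Adj v u}
      ((filter_subset _ _).trans_ssubset (erase_ssubset hv))
      fun T hT ↦ hS T (hT.trans ((filter_subset _ _).trans (erase_subset v S)))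
    set e := #{u ∈ S.erase v | ¬ G.Adj v u}
    have card_S := card_filter_not_adj_add (G := G) hv
    have card_erase := card_erase_add_one hv
    have branch : β ^ #(S.erase v) + β ^ e ≤ β ^ #S :=
      card_erase ▸ pow_add_pow_le_pow_succ hβ hd (by omega)
    calc (#(independentSubsets G S) : ℝ)
        ≤ #(independentSubsets G (S.erase v)) +
            #(independentSubsets G {u ∈ S.erase v | ¬ G.Adj v u}) := by
          exact_mod_cast card_independentSubsets_le_add
      _ ≤ 2 ^ M * β ^ #(S.erase v) + 2 ^ M * β ^ e := add_le_add ih_erase ih_filter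
      _ = 2 ^ M * (β ^ #(S.erase v) + β ^ e) := by ring
      _ ≤ 2 ^ M * β ^ #S := by gcongr

lemma two_mul_logb_one_add_le {x : ℝ} (hx : 0 ≤ x) : 2 * Real.logb 2 (1 + x) ≤ 3 * x := by
  have hlog : Real.log (1 + x) ≤ x := by
    linarith [Real.log_le_sub_one_of_pos (by linarith : 0 < 1 + x)]
  rw [Real.logb, ← mul_div_assoc, div_le_iff₀ (Real.log_pos one_lt_two)]
  nlinarith [Real.log_two_gt_d9]

lemma logb_card_independentSubsets_le {η M : ℝ} {d : ℕ} (hη : 0 ≤ η)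
    (hd : 1 ≤ η ^ 3 * d ^ 2)
    (hS : ∀ T ⊆ S, M < #T → ∃ v ∈ T, d ≤ #{u ∈ T | G.Adj v u}) :
    Real.logb 2 #(independentSubsets G S) ≤ M + 3 * η * #S := by
  -- The base is a square so that Bernoulli's inequality makes `β ^ d` quadratic in `d`.
  have bernoulli : d * η ≤ (1 + η) ^ d := by
    linarith [one_add_mul_le_pow (by linarith : -2 ≤ η) d]
  have count := card_independentSubsets_le (β := (1 + η) ^ 2) (one_le_pow₀ (by linarith))
    (calc 1 ≤ η * (d * η) ^ 2 := by linarith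
      _ ≤ η * ((1 + η) ^ d) ^ 2 := by gcongr
      _ ≤ ((1 + η) ^ 2 - 1) * ((1 + η) ^ 2) ^ d := by
        rw [pow_right_comm]
        gcongr
        linarith [sq_nonneg η]) hS
  have card_pos : 0 < #(independentSubsets G S) :=
    card_pos.2 ⟨∅, by simp [independentSubsets, SimpleGraph.IsIndepSet]⟩
  calc Real.logb 2 #(independentSubsets G S)
      ≤ Real.logb 2 (2 ^ M * ((1 + η) ^ 2) ^ #S) :=
        Real.logb_le_logb_of_le one_lt_two (mod_cast card_pos) count
    _ = M + #S * (2 * Real.logb 2 (1 + η)) := by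
        rw [Real.logb_mul (by positivity) (by positivity), Real.logb_rpow (by simp) (by simp),
          Real.logb_pow, Real.logb_pow]
        norm_num
    _ ≤ M + #S * (3 * η) := by gcongr _ + _ * ?_; exact two_mul_logb_one_add_le hη
    _ = M + 3 * η * #S := by ring

end IndependentSets

/-- The graph on the finite subsets of `α` joining disjoint sets. It induces the Kneser graph on the
`k`-element subsets. Distinctness is part of adjacency because `∅` is disjoint from itself. -/
def disjointnessGraph (α : Type*) : SimpleGraph (Finset α) where
  Adj s t := s ≠ t ∧ Disjoint s t
  symm := ⟨fun _ _ h ↦ ⟨h.1.symm, h.2.symm⟩⟩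
  loopless := ⟨fun _ h ↦ h.1 rfl⟩

instance {α : Type*} [DecidableEq α] : DecidableRel (disjointnessGraph α).Adj :=
  fun s t ↦ inferInstanceAs (Decidable (s ≠ t ∧ Disjoint s t))

lemma disjointnessGraph_adj_iff {α : Type*} {s t : Finset α} (hs : s.Nonempty) :
    (disjointnessGraph α).Adj s t ↔ Disjoint s t :=
  ⟨And.right, fun h ↦ ⟨h.ne hs.ne_empty, h⟩⟩

section IntersectingHypergraphs

variable {n k : ℕ}

lemma exists_mem_le_card_filter_disjoint {δ : ℝ} {S : Finset (Finset (Fin n))} (hδ : 0 ≤ δ)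
    (hδ₁ : δ ≤ 1) (hk : 1 ≤ k) (hn : 2 * k ≤ n) (hS : (S : Set (Finset (Fin n))).Sized k)
    (hcard : (1 + δ) * (n - 1).choose (k - 1) < #S) :
    ∃ s ∈ S, δ * (n - k).choose (k - 1) / (2 * k) ≤ #{t ∈ S | Disjoint s t} := by
  by_contra! hdeg
  have supersaturation : ((n - k).choose (k - 1) * #S : ℝ) ≤
      (n - k).choose (k - 1) * (n - 1).choose (k - 1) +
        k * #{p ∈ S ×ˢ S | Disjoint p.1 p.2} :=
    mod_cast choose_mul_card_le_add_disjoint_pairs hk hn hS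
  have few_pairs : (#{p ∈ S ×ˢ S | Disjoint p.1 p.2} : ℝ) ≤
      #S * (δ * (n - k).choose (k - 1) / (2 * k)) := by
    rw [card_filter, sum_product, Nat.cast_sum, ← nsmul_eq_mul]
    simp only [← card_filter]
    exact sum_le_card_nsmul _ _ _ fun s hs ↦ (hdeg s hs).le
  have hC : (0 : ℝ) < (n - k).choose (k - 1) := mod_cast Nat.choose_pos (by omega)
  have hk₀ : (0 : ℝ) < k := mod_cast hk
  have small : (1 - δ / 2) * #S ≤ (n - 1).choose (k - 1) := by
    refine le_of_mul_le_mul_left ?_ hC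
    calc ((n - k).choose (k - 1) * ((1 - δ / 2) * #S) : ℝ)
        = (n - k).choose (k - 1) * #S - k * (#S * (δ * (n - k).choose (k - 1) / (2 * k))) := by
          field_simp
      _ ≤ _ := by linarith [mul_le_mul_of_nonneg_left few_pairs hk₀.le]
  have large : ((n - 1).choose (k - 1) : ℝ) ≤
      (1 - δ / 2) * ((1 + δ) * (n - 1).choose (k - 1)) := by
    rw [← mul_assoc]
    exact le_mul_of_one_le_left (by positivity) (by nlinarith)
  exact (mul_lt_mul_of_pos_left hcard (by linarith)).not_ge (small.trans large)

lemma sq_le_sixteen_mul_choose (hk : 3 ≤ k) (hn : 2 * k + 1 ≤ n) :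
    n ^ 2 ≤ 16 * (n - k).choose (k - 1) := by
  refine le_trans ?_ (Nat.mul_le_mul_left 16
    (choose_le_choose_of_add_le (show 2 ≤ k - 1 by omega) (by omega)))
  have hn' : (n + 1 : ℝ) ≤ 2 * (n - k : ℕ) := mod_cast (by omega)
  have sq_le : (n ^ 2 : ℝ) ≤ 16 * (n - k).choose 2 := by
    rw [Nat.cast_choose_two]
    have : (2 : ℝ) ≤ n := mod_cast (by omega)
    nlinarith
  exact_mod_cast sq_le

lemma numIntersecting_eq_card_independentSubsets (hk : 1 ≤ k) :
    numIntersecting n k =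
      #(independentSubsets (disjointnessGraph (Fin n)) (powersetCard k univ)) := by
  refine Nat.subtype_card _ fun H ↦ ?_
  simp only [independentSubsets, mem_filter, mem_powerset, subset_powersetCard_univ_iff]
  refine and_congr_right fun hH ↦ ⟨fun hI s hs t ht ↦ ?_, fun hI s hs t ht _ hst ↦
    not_disjoint_iff_nonempty_inter.2 (hI s hs t ht) hst.2⟩
  have hs₀ : s.Nonempty := card_pos.1 (by rw [hH hs]; omega)
  rw [← not_disjoint_iff_nonempty_inter]
  intro hst
  exact hI hs ht (hst.ne hs₀.ne_empty) ((disjointnessGraph_adj_iff hs₀).2 hst)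

lemma two_pow_card_le_numIntersecting {A : Finset (Finset (Fin n))} (hA : IsKUniform n k A)
    (hI : IsIntersectingHyp n A) : 2 ^ #A ≤ numIntersecting n k := by
  rw [← card_powerset, ← Nat.card_eq_finsetCard]
  refine Nat.card_le_card_of_injective (Subtype.map id fun T hT ↦ ?_)
    (Subtype.map_injective _ Function.injective_id)
  rw [mem_powerset] at hT
  exact ⟨fun s hs ↦ hA s (hT hs), fun s hs t ht ↦ hI s (hT hs) t (hT ht)⟩

lemma choose_le_logb_numIntersecting (hk : 1 ≤ k) (hn : 1 ≤ n) :
    ((n - 1).choose (k - 1) : ℝ) ≤ Real.logb 2 (numIntersecting n k) := by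
  let x : Fin n := ⟨0, hn⟩
  have card_star : #{s ∈ powersetCard k univ | {x} ⊆ s} = (n - 1).choose (k - 1) := by
    simpa using card_filter_powersetCard_subset {x} univ k (subset_univ _) (by simpa using hk)
  have count := two_pow_card_le_numIntersecting (k := k) (A := {s ∈ powersetCard k univ | {x} ⊆ s})
    (fun s hs ↦ mem_powersetCard_univ.1 (mem_filter.1 hs).1)
    (fun s hs t ht ↦ ⟨x, by simp_all⟩)
  rw [Real.le_logb_iff_rpow_le one_lt_two, Real.rpow_natCast, ← card_star]
  · exact_mod_cast count
  · exact_mod_cast (Nat.two_pow_pos _).trans_le count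

lemma logb_numIntersecting_le {δ : ℝ} (hδ : 0 < δ) (hδ₁ : δ ≤ 1) (hk : 3 ≤ k)
    (hkn : 2 * k + 1 ≤ n) (hn : 1024 / δ ^ 5 ≤ n) :
    Real.logb 2 (numIntersecting n k) ≤ (1 + 4 * δ) * (n - 1).choose (k - 1) := by
  have hn₀ : (0 : ℝ) < n := mod_cast (by omega)
  have hk₁ : (1 : ℝ) ≤ k := mod_cast (by omega)
  set C := (n - k).choose (k - 1)
  set d := ⌈δ * C / (2 * k)⌉₊
  set η := δ * k / n
  have star : (n : ℝ) * (n - 1).choose (k - 1) = n.choose k * k := by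
    have := Nat.add_one_mul_choose_eq (n - 1) (k - 1)
    rw [Nat.sub_add_cancel (by omega), Nat.sub_add_cancel (by omega)] at this
    exact_mod_cast this
  have branching : 1 ≤ η ^ 3 * d ^ 2 := by
    have hC : (n : ℝ) ^ 2 / 16 ≤ C := by
      rw [div_le_iff₀' (by norm_num)]
      exact_mod_cast sq_le_sixteen_mul_choose hk hkn
    calc 1 ≤ δ ^ 5 * n / 1024 := by
          rw [div_le_iff₀ (by positivity)] at hn
          linarith
      _ ≤ δ ^ 5 * n / 1024 * k := le_mul_of_one_le_right (by positivity) hk₁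
      _ = η ^ 3 * (δ * (n ^ 2 / 16) / (2 * k)) ^ 2 := by simp only [η]; field_simp; norm_num
      _ ≤ η ^ 3 * (δ * C / (2 * k)) ^ 2 := by gcongr
      _ ≤ η ^ 3 * d ^ 2 := by gcongr; exact Nat.le_ceil _
  have high_degree : ∀ S ⊆ powersetCard k (univ : Finset (Fin n)),
      (1 + δ) * (n - 1).choose (k - 1) < #S →
        ∃ s ∈ S, d ≤ #{t ∈ S | (disjointnessGraph (Fin n)).Adj s t} := fun S hS hcard ↦ by
    rw [subset_powersetCard_univ_iff] at hS
    obtain ⟨s, hs, hdeg⟩ :=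
      exists_mem_le_card_filter_disjoint hδ.le hδ₁ (by omega) (by omega) hS hcard
    have hs₀ : s.Nonempty := card_pos.1 (by rw [hS hs]; omega)
    exact ⟨s, hs, by simpa only [disjointnessGraph_adj_iff hs₀] using Nat.ceil_le.2 hdeg⟩
  rw [numIntersecting_eq_card_independentSubsets (by omega)]
  calc _ ≤ (1 + δ) * (n - 1).choose (k - 1) + 3 * η * #(powersetCard k (univ : Finset (Fin n))) :=
        logb_card_independentSubsets_le (by positivity) branching high_degree
    _ = (1 + δ) * (n - 1).choose (k - 1) + 3 * δ * (n.choose k * k) / n := by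
        rw [card_powersetCard, card_univ, Fintype.card_fin]; simp only [η]; ring
    _ = (1 + 4 * δ) * (n - 1).choose (k - 1) := by
        rw [← star]; field_simp; ring

end IntersectingHypergraphs

theorem log_number_of_intersecting_hypergraphs :
    (∀ n k : ℕ, 3 ≤ k → 2 * k + 1 ≤ n →
      ((n - 1).choose (k - 1) : ℝ) ≤ Real.logb 2 (numIntersecting n k)) ∧
    (∀ ε : ℝ, 0 < ε → ∃ n₀ : ℕ, ∀ n : ℕ, n₀ ≤ n → ∀ k : ℕ, 3 ≤ k → 2 * k ≤ n - 1 →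
      Real.logb 2 (numIntersecting n k) ≤ (1 + ε) * ((n - 1).choose (k - 1) : ℝ)) := by
  refine ⟨fun n k hk hn ↦ choose_le_logb_numIntersecting (by omega) (by omega), fun ε hε ↦ ?_⟩
  set δ := min (ε / 4) 1
  have hδ : 0 < δ := lt_min (by linarith) one_pos
  refine ⟨⌈1024 / δ ^ 5⌉₊, fun n hn k hk hkn ↦ ?_⟩
  calc Real.logb 2 (numIntersecting n k) ≤ (1 + 4 * δ) * (n - 1).choose (k - 1) :=
        logb_numIntersecting_le hδ (min_le_right _ _) hk (by omega) (Nat.ceil_le.1 hn)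
    _ ≤ (1 + ε) * (n - 1).choose (k - 1) := by
        gcongr
        linarith [min_le_left (ε / 4) 1]
end
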